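/- arXiv:0911.4838 — 2 statements merged into one kernel-verified Lean document; each statement's English description precedes it below -/
import Mathlib

section
/- For every ω > 0 and every n ∈ ℕ there exist positive constants B_n and C_n such that for all B > B_n, all m ∈ ℤ, and every eigenfunction ψ of Q_m(B) with eigenvalue λ ≤ Θ₀ + ω·B^{−1/3}: ∫_{ℝ²₊} |ρ|ⁿ·(|ψ|² + |∂_τψ|² + B^{−1/3}·|∂_ρψ|²) dτ dρ ≤ C_n·‖ψ‖². -/
noncomputable section
open MeasureTheory Real Filter Set Topology

/-- The de Gennes energy `λ₁^𝒢(ξ)`. -/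
def deGennes (ξ : ℝ) : ℝ :=
  sInf { q : ℝ | ∃ u : ℝ → ℂ, ContDiff ℝ 1 u ∧
    IntegrableOn (fun t => ‖u t‖ ^ 2) (Ioi 0) ∧
    IntegrableOn (fun t => ‖deriv u t‖ ^ 2 + (t + ξ) ^ 2 * ‖u t‖ ^ 2) (Ioi 0) ∧
    0 < (∫ t in Ioi (0:ℝ), ‖u t‖ ^ 2) ∧
    q = (∫ t in Ioi (0:ℝ), (‖deriv u t‖ ^ 2 + (t + ξ) ^ 2 * ‖u t‖ ^ 2)) /
        ∫ t in Ioi (0:ℝ), ‖u t‖ ^ 2 }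

/-- `Θ₀`, the infimum of the de Gennes energy. -/
def Theta0 : ℝ := ⨅ ξ : ℝ, deGennes ξ

/-- The half plane `ℝ²₊ = {(τ, ρ) : τ > 0}`. -/
def halfPlane : Set (ℝ × ℝ) := Ioi (0:ℝ) ×ˢ (univ : Set ℝ)

/-- The potential of the effective operator `Q_m(B)`. -/
def qPot (B : ℝ) (m : ℤ) (p : ℝ × ℝ) : ℝ :=
  (p.1 + ((m : ℝ) - B / 2) / Real.sqrt B + B ^ (-(1:ℝ)/6) * p.2 ^ 2 / 2) ^ 2

/-- The integrand of the quadratic form `q_m`. -/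
def qIntegrand (B : ℝ) (m : ℤ) (ψ : ℝ × ℝ → ℂ) (p : ℝ × ℝ) : ℝ :=
  ‖fderiv ℝ ψ p (1, 0)‖ ^ 2 + qPot B m p * ‖ψ p‖ ^ 2
    + B ^ (-(1:ℝ)/3) * ‖fderiv ℝ ψ p (0, 1)‖ ^ 2

/-- The quadratic form `q_m[ψ]`. -/
def qForm (B : ℝ) (m : ℤ) (ψ : ℝ × ℝ → ℂ) : ℝ :=
  ∫ p in halfPlane, qIntegrand B m ψ p

/-- Membership in the form domain of `q_m`. -/
def InFormDomain (B : ℝ) (m : ℤ) (ψ : ℝ × ℝ → ℂ) : Prop :=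
  ContDiff ℝ 1 ψ ∧ IntegrableOn (fun p => ‖ψ p‖ ^ 2) halfPlane ∧
    IntegrableOn (qIntegrand B m ψ) halfPlane

/-- The rescaled momentum `δ̃₁ = ((m - B/2)/√B - ξ₀)·B^{1/6}`. -/
def delta1 (B : ℝ) (m : ℤ) (ξ₀ : ℝ) : ℝ :=
  (((m : ℝ) - B / 2) / Real.sqrt B - ξ₀) * B ^ ((1:ℝ)/6)

/-- Second derivative in the `τ` direction. -/
def d2τ (ψ : ℝ × ℝ → ℂ) (p : ℝ × ℝ) : ℂ :=
  fderiv ℝ (fun q => fderiv ℝ ψ q ((1:ℝ), (0:ℝ))) p (1, 0)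

/-- Second derivative in the `ρ` direction. -/
def d2ρ (ψ : ℝ × ℝ → ℂ) (p : ℝ × ℝ) : ℂ :=
  fderiv ℝ (fun q => fderiv ℝ ψ q ((0:ℝ), (1:ℝ))) p (0, 1)

/-- An eigenfunction of the model operator `Q_m(B)` on the half plane, with Neumann
boundary condition at `τ = 0`, eigenvalue `lam`, which is nonzero, smooth up to the
boundary, and lies in `L²` together with its first derivatives. -/
def IsQEigenfunction (B : ℝ) (m : ℤ) (lam : ℝ) (ψ : ℝ × ℝ → ℂ) : Prop :=
  ContDiff ℝ (⊤ : ℕ∞) ψ ∧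
  IntegrableOn (fun p => ‖ψ p‖ ^ 2) halfPlane ∧
  IntegrableOn (fun p => ‖fderiv ℝ ψ p ((1:ℝ), (0:ℝ))‖ ^ 2) halfPlane ∧
  IntegrableOn (fun p => ‖fderiv ℝ ψ p ((0:ℝ), (1:ℝ))‖ ^ 2) halfPlane ∧
  0 < (∫ p in halfPlane, ‖ψ p‖ ^ 2) ∧
  (∀ p ∈ halfPlane,
    -d2τ ψ p - ((B ^ (-(1:ℝ)/3) : ℝ) : ℂ) * d2ρ ψ p + ((qPot B m p : ℝ) : ℂ) * ψ p
      = (lam : ℂ) * ψ p) ∧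
  (∀ ρ : ℝ, fderiv ℝ ψ ((0:ℝ), ρ) ((1:ℝ), (0:ℝ)) = 0)

/-!
Write `k = B^(-1/3)`. For fixed `ρ` the operator `Q_m(B)` acts in `τ` as the de Gennes operator with
parameter `ξ₀ + √k (δ + ρ²/2)`, where `ξ₀` is the minimum point of the de Gennes energy and
`δ = delta1 B m ξ₀`. That energy lies above `Θ₀ + c min(1, (ξ - ξ₀)²)`: an explicit parabolic
cylinder function provides the ground state at `ξ₀`, and perturbing its logarithmic derivative
gives Riccati multipliers for all other `ξ`. Hence `Q_m(B) - Θ₀` dominates `k` times the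
one-dimensional operator `-∂ρ² + c min(K, (δ + ρ²/2)²)`, with `K` as large as desired once `B` is
large.

This operator exceeds any prescribed level outside a strip `|ρ| < R` that does not depend on `δ`,
hence not on `m`. The potential does so pointwise unless `δ` is very negative, when it vanishes at
`ρ = ±√(-2δ)`; but then these wells are so narrow that the kinetic energy makes up for them.

An eigenvalue below `Θ₀ + ω k` therefore forces decay in `ρ`. Testing with `g² ψ`, where `g`
truncates `ρ^n`, produces a localization error of size `k ∫ ρ^(2(n-1)) |ψ|²`, the same order `k` as
the gap, so the moments are bounded by induction on `n`.
-/

section CylinderIntegral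

variable {β x : ℝ}

/-- The integral `∫₀^∞ s^β e^{-s²/4 - xs} ds`, which for `β > -1` is, up to the factor `Γ(β + 1)`,
the decaying parabolic cylinder function `D_{-β-1}(√2 x)` without its Gaussian factor. -/
def cylinderIntegral (β x : ℝ) : ℝ :=
  ∫ s in Ioi (0 : ℝ), s ^ β * exp (-s ^ 2 / 4 - x * s)

lemma integrableOn_cylinderIntegrand (hβ : -1 < β) (x : ℝ) :
    IntegrableOn (fun s : ℝ => s ^ β * exp (-s ^ 2 / 4 - x * s)) (Ioi 0) := by
  have hdom := (integrableOn_rpow_mul_exp_neg_mul_sq (b := 1 / 8) (by norm_num) hβ).const_mul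
    (exp (2 * x ^ 2))
  refine Integrable.mono' hdom ?_ ?_
  · refine ContinuousOn.aestronglyMeasurable (ContinuousOn.mul ?_ (by fun_prop)) measurableSet_Ioi
    exact fun s (hs : 0 < s) => (continuousAt_rpow_const s β (Or.inl hs.ne')).continuousWithinAt
  · refine (ae_restrict_mem measurableSet_Ioi).mono fun s (hs : 0 < s) => ?_
    rw [Real.norm_of_nonneg (by positivity), mul_left_comm, ← Real.exp_add]
    gcongr
    nlinarith [sq_nonneg (s + 4 * x)]

lemma cylinderIntegral_pos (hβ : -1 < β) (x : ℝ) : 0 < cylinderIntegral β x := by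
  have hpos : ∀ s ∈ Ioi (0 : ℝ), 0 < s ^ β * exp (-s ^ 2 / 4 - x * s) := fun s (hs : 0 < s) => by
    positivity
  rw [cylinderIntegral, setIntegral_pos_iff_support_of_nonneg_ae
    ((ae_restrict_mem measurableSet_Ioi).mono fun s hs => (hpos s hs).le)
    (integrableOn_cylinderIntegrand hβ x)]
  refine (by simp : (0 : ENNReal) < volume (Ioi (0 : ℝ))).trans_le (measure_mono fun s hs => ?_)
  exact ⟨(hpos s hs).ne', hs⟩

lemma hasDerivAt_cylinderIntegral (hβ : -1 < β) (x : ℝ) :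
    HasDerivAt (cylinderIntegral β) (-cylinderIntegral (β + 1) x) x := by
  have hβ' : -1 < β + 1 := by linarith
  rw [cylinderIntegral, ← integral_neg]
  refine (hasDerivAt_integral_of_dominated_loc_of_deriv_le
    (F' := fun x s : ℝ => -(s ^ (β + 1) * exp (-s ^ 2 / 4 - x * s)))
    (bound := fun s => s ^ (β + 1) * exp (-s ^ 2 / 4 - (x - 1) * s))
    (Metric.ball_mem_nhds x one_pos)
    (Eventually.of_forall fun z => (integrableOn_cylinderIntegrand hβ z).aestronglyMeasurable)
    (integrableOn_cylinderIntegrand hβ x)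
    (integrableOn_cylinderIntegrand hβ' x).aestronglyMeasurable.neg
    ?_ (integrableOn_cylinderIntegrand hβ' (x - 1)) ?_).2
  · refine (ae_restrict_mem measurableSet_Ioi).mono fun s (hs : 0 < s) z hz => ?_
    rw [norm_neg, Real.norm_of_nonneg (by positivity)]
    rw [Metric.mem_ball, Real.dist_eq, abs_lt] at hz
    gcongr
    linarith
  · refine (ae_restrict_mem measurableSet_Ioi).mono fun s (hs : 0 < s) z _ => ?_
    have hexponent : HasDerivAt (fun z : ℝ => -s ^ 2 / 4 - z * s) (-s) z := by
      simpa using ((hasDerivAt_id z).mul_const s).const_sub (-s ^ 2 / 4)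
    refine (hexponent.exp.const_mul (s ^ β)).congr_deriv ?_
    rw [rpow_add_one hs.ne']
    ring

/-- Integration of `d/ds (s^β e^{-s²/4 - xs})`; the boundary term `0 ^ β` is `1` for `β = 0` and
`0` for `β > 0`. -/
lemma cylinderIntegral_recurrence (hβ : 0 ≤ β) (x : ℝ) :
    β * cylinderIntegral (β - 1) x + 0 ^ β
      = cylinderIntegral (β + 1) x / 2 + x * cylinderIntegral β x := by
  let w : ℝ → ℝ := fun s => exp (-s ^ 2 / 4 - x * s)
  have hw : ∀ s, HasDerivAt w (w s * (-s / 2 - x)) s := fun s => by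
    have := (((hasDerivAt_id s).pow 2).neg.div_const 4).sub ((hasDerivAt_id s).const_mul x)
    refine (this.congr_deriv ?_).exp
    simp only [Nat.cast_ofNat, id_eq, Nat.add_one_sub_one, pow_one, mul_one, sub_left_inj]
    ring
  have hint₁ : IntegrableOn (fun s => β * (s ^ (β - 1) * w s)) (Ioi 0) := by
    rcases hβ.eq_or_lt with rfl | hβ
    · simp
    · exact (integrableOn_cylinderIntegrand (by linarith) x).const_mul β
  have hint₂ : IntegrableOn (fun s => s ^ β * w s) (Ioi 0) :=
    integrableOn_cylinderIntegrand (by linarith) x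
  have hint₃ : IntegrableOn (fun s => s ^ (β + 1) * w s) (Ioi 0) :=
    integrableOn_cylinderIntegrand (by linarith) x
  have hint₄ : IntegrableOn (fun s => s ^ (β + 1) * w s / 2 + x * (s ^ β * w s)) (Ioi 0) :=
    (hint₃.div_const 2).add (hint₂.const_mul x)
  have hderiv : ∀ s ∈ Ioi (0 : ℝ), HasDerivAt (fun s => s ^ β * w s)
      (β * (s ^ (β - 1) * w s) - (s ^ (β + 1) * w s / 2 + x * (s ^ β * w s))) s := by
    refine fun s (hs : 0 < s) =>
      ((hasDerivAt_rpow_const (p := β) (Or.inl hs.ne')).mul (hw s)).congr_deriv ?_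
    rw [rpow_add_one hs.ne']
    ring
  have hcont : ContinuousWithinAt (fun s => s ^ β * w s) (Ici 0) 0 :=
    ((continuous_rpow_const hβ).mul (by fun_prop)).continuousWithinAt
  have hint := hint₁.sub hint₄
  have hlim := tendsto_zero_of_hasDerivAt_of_integrableOn_Ioi hderiv hint hint₂
  have hFTC := integral_Ioi_of_hasDerivAt_of_tendsto hcont hderiv hint hlim
  rw [integral_sub hint₁ hint₄, integral_add (hint₃.div_const 2) (hint₂.const_mul x),
    integral_const_mul, integral_const_mul, integral_div] at hFTC
  simp only [cylinderIntegral]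
  simp only [w, mul_zero, sub_zero] at hFTC
  norm_num at hFTC
  linarith

lemma continuousOn_cylinderIntegral :
    ContinuousOn (fun p : ℝ × ℝ => cylinderIntegral p.1 p.2) (Icc 0 2 ×ˢ Ici (-1)) := by
  refine continuousOn_of_dominated (bound := fun s =>
    s ^ (0 : ℝ) * exp (-s ^ 2 / 4 - (-1) * s) + s ^ (2 : ℝ) * exp (-s ^ 2 / 4 - (-1) * s))
    (fun p hp => (integrableOn_cylinderIntegrand (by linarith [hp.1.1]) _).aestronglyMeasurable)
    (fun p hp => ?_) ((integrableOn_cylinderIntegrand (by norm_num) _).add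
      (integrableOn_cylinderIntegrand (by norm_num) _)) ?_
  · obtain ⟨⟨hβ₀, hβ₂⟩, hx : -1 ≤ p.2⟩ := hp
    refine (ae_restrict_mem measurableSet_Ioi).mono fun s (hs : 0 < s) => ?_
    have hpow : s ^ p.1 ≤ s ^ (0 : ℝ) + s ^ (2 : ℝ) := by
      rcases le_total s 1 with h | h
      · exact le_add_of_le_of_nonneg (rpow_le_rpow_of_exponent_ge hs h hβ₀) (by positivity)
      · exact le_add_of_nonneg_of_le (by positivity) (rpow_le_rpow_of_exponent_le h hβ₂)
    rw [Real.norm_of_nonneg (by positivity), ← add_mul]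
    gcongr
  · refine (ae_restrict_mem measurableSet_Ioi).mono fun s (hs : 0 < s) => Continuous.continuousOn ?_
    exact (continuous_const.rpow continuous_fst fun _ => Or.inl hs.ne').mul (by fun_prop)

/-- The sign change of `β (J_β(-y) - y J_{β-1}(-y))` is read off after the recurrence relation has
removed `J_{β-1}`, which diverges at the endpoint `y = 1`. -/
lemma exists_cylinderIntegral_neumann : ∃ y : ℝ, 0 < y ∧ y < 1 ∧
    cylinderIntegral ((1 - y ^ 2) / 2) (-y)
      = y * cylinderIntegral ((1 - y ^ 2) / 2 - 1) (-y) := by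
  let F : ℝ → ℝ := fun y => y * cylinderIntegral ((1 - y ^ 2) / 2 + 1) (-y) / 2
    - (y ^ 2 + (1 - y ^ 2) / 2) * cylinderIntegral ((1 - y ^ 2) / 2) (-y)
  have hcurve : ∀ j ∈ Icc (0 : ℝ) 1,
      ContinuousOn (fun y : ℝ => cylinderIntegral ((1 - y ^ 2) / 2 + j) (-y)) (Icc 0 1) := by
    refine fun j hj => continuousOn_cylinderIntegral.comp
      (f := fun y : ℝ => ((1 - y ^ 2) / 2 + j, -y)) (by fun_prop) fun y hy => ?_
    exact ⟨⟨by nlinarith [hy.1, hy.2, hj.1], by nlinarith [hy.1, hy.2, hj.2]⟩, neg_le_neg hy.2⟩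
  have hF : ContinuousOn F (Icc 0 1) := by
    have h₀ := hcurve 0 (by simp)
    have h₁ := hcurve 1 (by simp)
    simp only [add_zero] at h₀
    exact ((continuousOn_id.mul h₁).div_const 2).sub (ContinuousOn.mul (by fun_prop) h₀)
  have hF0 : F 0 < 0 := by
    have := cylinderIntegral_pos (β := 1 / 2) (by norm_num) 0
    norm_num [F]
    linarith
  have hF1 : 0 < F 1 := by
    have := cylinderIntegral_recurrence le_rfl (-1)
    norm_num [F] at this ⊢
    linarith
  obtain ⟨y, ⟨hy0, hy1⟩, hy⟩ := intermediate_value_Ioo zero_le_one hF ⟨hF0, hF1⟩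
  have hβ : 0 < (1 - y ^ 2) / 2 := by nlinarith
  have hrec := cylinderIntegral_recurrence hβ.le (-y)
  rw [zero_rpow hβ.ne'] at hrec
  exact ⟨y, hy0, hy1, mul_left_cancel₀ hβ.ne' (by linear_combination (-y) * hrec - hy)⟩

end CylinderIntegral

section GroundState

variable {y : ℝ} {v v' : ℝ → ℝ}

/-- The pair `(v, v')` is a positive solution, with its derivative, of the parabolic cylinder
equation `-v'' + x² v = y² v` which decays at `+∞` and satisfies the Neumann condition at `-y`. In
other words, `t ↦ v (t - y)` is a ground state of `-d²/dt² + (t - y)²` on the half line. -/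
structure IsNeumannGroundState (y : ℝ) (v v' : ℝ → ℝ) : Prop where
  center_pos : 0 < y
  center_lt_one : y < 1
  pos (x : ℝ) : 0 < v x
  hasDerivAt (x : ℝ) : HasDerivAt v (v' x) x
  hasDerivAt' (x : ℝ) : HasDerivAt v' ((x ^ 2 - y ^ 2) * v x) x
  neumann : v' (-y) = 0
  deriv_lt (x : ℝ) : v' x < -x * v x
  neg_deriv_le {x : ℝ} (hx : 1 ≤ x) : -v' x ≤ (x + 1) * v x

lemma exists_isNeumannGroundState : ∃ y v v', IsNeumannGroundState y v v' := by
  obtain ⟨y, hy0, hy1, hy⟩ := exists_cylinderIntegral_neumann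
  obtain ⟨α, hα⟩ : ∃ α, α = (1 - y ^ 2) / 2 := ⟨_, rfl⟩
  rw [← hα] at hy
  have hα0 : 0 < α := by nlinarith
  have hα1 : α ≤ 1 := by nlinarith
  have hJ := cylinderIntegral_pos (β := α) (by linarith)
  have hJ_pred := cylinderIntegral_pos (β := α - 1) (by linarith)
  have hJ_succ := cylinderIntegral_pos (β := α + 1) (by linarith)
  have hrec (x : ℝ) := cylinderIntegral_recurrence hα0.le x
  simp only [zero_rpow hα0.ne', add_zero] at hrec
  have hderiv_pred (x : ℝ) := hasDerivAt_cylinderIntegral (β := α - 1) (by linarith) x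
  simp only [sub_add_cancel] at hderiv_pred
  have hderiv (x : ℝ) := hasDerivAt_cylinderIntegral (β := α) (by linarith) x
  have hgauss (x : ℝ) : HasDerivAt (fun x : ℝ => exp (-x ^ 2 / 2)) (exp (-x ^ 2 / 2) * -x) x := by
    refine HasDerivAt.exp ((((hasDerivAt_id x).pow 2).neg.div_const 2).congr_deriv ?_)
    simp only [Nat.cast_ofNat, id_eq, Nat.add_one_sub_one, pow_one, mul_one]
    ring
  refine ⟨y, fun x => exp (-x ^ 2 / 2) * cylinderIntegral (α - 1) x,
    fun x => -(exp (-x ^ 2 / 2) * (x * cylinderIntegral (α - 1) x + cylinderIntegral α x)),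
    hy0, hy1, fun x => mul_pos (exp_pos _) (hJ_pred x), fun x => ?_, fun x => ?_, ?_, fun x => ?_,
    fun {x} hx => ?_⟩
  · refine ((hgauss x).mul (hderiv_pred x)).congr_deriv ?_
    ring
  · refine ((hgauss x).mul (((hasDerivAt_id x).mul (hderiv_pred x)).add (hderiv x))).neg.congr_deriv
      ?_
    simp only [id, Pi.mul_apply, Pi.add_apply]
    linear_combination (-2 * exp (-x ^ 2 / 2)) * hrec x
      + 2 * (exp (-x ^ 2 / 2) * cylinderIntegral (α - 1) x) * hα
  · rw [hy]; ring
  · have := mul_pos (exp_pos (-x ^ 2 / 2)) (hJ x)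
    linarith
  · have hle : cylinderIntegral α x ≤ cylinderIntegral (α - 1) x := by
      nlinarith [hα1, hrec x, hJ x, hJ_pred x, hJ_succ x]
    have := mul_le_mul_of_nonneg_left hle (exp_pos (-x ^ 2 / 2)).le
    linarith

lemma three_sub_arctan_mem_Icc (x : ℝ) : 3 - arctan x ∈ Icc 1 5 :=
  ⟨by linarith [arctan_lt_pi_div_two x, pi_lt_four],
    by linarith [neg_pi_div_two_lt_arctan x, pi_lt_four]⟩

namespace IsNeumannGroundState

variable (h : IsNeumannGroundState y v v')
include h

lemma continuous : Continuous v :=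
  continuous_iff_continuousAt.2 fun x => (h.hasDerivAt x).continuousAt

lemma continuous' : Continuous v' :=
  continuous_iff_continuousAt.2 fun x => (h.hasDerivAt' x).continuousAt

lemma hasDerivAt_neg_div (x : ℝ) :
    HasDerivAt (fun x => -v' x / v x) (y ^ 2 - x ^ 2 + (-v' x / v x) ^ 2) x := by
  refine ((h.hasDerivAt' x).neg.div (h.hasDerivAt x) (h.pos x).ne').congr_deriv ?_
  have := (h.pos x).ne'
  simp only [Pi.neg_apply]
  field_simp
  ring

lemma le_neg_div_of_mem_Icc {x : ℝ} (hx : x ∈ Icc (-y) y) :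
    (x + y) ^ 2 * (2 * y - x) / 3 ≤ -v' x / v x := by
  have hderiv : ∀ x, HasDerivAt (fun x => -v' x / v x - (x + y) ^ 2 * (2 * y - x) / 3)
      ((-v' x / v x) ^ 2) x := fun x => by
    have := (((hasDerivAt_id x).add_const y).pow 2).mul ((hasDerivAt_id x).const_sub (2 * y))
    refine ((h.hasDerivAt_neg_div x).sub (this.div_const 3)).congr_deriv ?_
    simp only [Nat.cast_ofNat, id_eq, Nat.add_one_sub_one, pow_one, mul_one, Pi.pow_apply, mul_neg]
    ring
  have hmono := monotoneOn_of_hasDerivWithinAt_nonneg (convex_Icc (-y) y)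
    (fun x _ => (hderiv x).continuousAt.continuousWithinAt)
    (fun x _ => (hderiv x).hasDerivWithinAt) (fun _ _ => sq_nonneg _)
  have := hmono (left_mem_Icc.2 (by linarith [h.center_pos])) hx hx.1
  simp only [h.neumann] at this
  simp only [neg_zero, zero_div, neg_add_cancel, ne_eq, OfNat.ofNat_ne_zero, not_false_eq_true,
    zero_pow, sub_neg_eq_add, zero_mul, sub_self, sub_nonneg] at this
  linarith

/-- With `s = -x - y` and `b = y s² / (1 + s²)`, the function `F = -v' - b v` vanishes at `s = 0`
and satisfies `dF/dx ≤ b F`, because `b² + db/ds ≤ s² + 2 y s = x² - y²`. The integrating factor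
is `exp (y (s - arctan s))`. -/
lemma le_neg_deriv_of_le {x : ℝ} (hx : x ≤ -y) :
    y * (-x - y) ^ 2 / (1 + (-x - y) ^ 2) * v x ≤ -v' x := by
  have hy0 := h.center_pos
  have hy1 := h.center_lt_one
  let b : ℝ → ℝ := fun x => y * (-x - y) ^ 2 / (1 + (-x - y) ^ 2)
  have hs (x : ℝ) : HasDerivAt (fun x : ℝ => -x - y) (-1) x := (hasDerivAt_neg x).sub_const y
  have hb (x : ℝ) : HasDerivAt b (-(2 * y * (-x - y) / (1 + (-x - y) ^ 2) ^ 2)) x := by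
    refine ((((hs x).pow 2).const_mul y).div (((hs x).pow 2).const_add 1)
      (by change 1 + (-x - y) ^ 2 ≠ 0; positivity)).congr_deriv ?_
    simp only [Pi.pow_apply]
    field_simp
    ring
  have hderiv (x : ℝ) : HasDerivAt
      (fun x => (-v' x - b x * v x) * exp (y * ((-x - y) - arctan (-x - y))))
      ((b x ^ 2 + 2 * y * (-x - y) / (1 + (-x - y) ^ 2) ^ 2 - (x ^ 2 - y ^ 2)) * v x
        * exp (y * ((-x - y) - arctan (-x - y)))) x := by
    refine (((h.hasDerivAt' x).neg.sub ((hb x).mul (h.hasDerivAt x))).mul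
      (((hs x).sub (hs x).arctan).const_mul y).exp).congr_deriv ?_
    simp only [Pi.neg_apply, Pi.sub_apply, Pi.mul_apply, b]
    field_simp
    ring
  have hanti := antitoneOn_of_hasDerivWithinAt_nonpos (convex_Iic (-y))
    (fun x _ => (hderiv x).continuousAt.continuousWithinAt)
    (fun x _ => (hderiv x).hasDerivWithinAt) fun x hx => ?_
  · have hle := hanti hx (mem_Iic.2 le_rfl) hx
    simp only [h.neumann, b] at hle
    norm_num at hle
    linarith [nonneg_of_mul_nonneg_left hle (exp_pos _)]
  · rw [interior_Iic] at hx
    have hs0 : 0 < -x - y := by linarith [mem_Iio.1 hx]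
    have hb2 : b x ^ 2 ≤ (-x - y) ^ 2 := by
      refine pow_le_pow_left₀ (by positivity) ((div_le_iff₀ (by positivity)).2 ?_) 2
      nlinarith [sq_nonneg (-x - y - 1), mul_pos hs0 hs0]
    have hb' : 2 * y * (-x - y) / (1 + (-x - y) ^ 2) ^ 2 ≤ 2 * y * (-x - y) :=
      div_le_self (by positivity) (one_le_pow₀ (by nlinarith))
    refine mul_nonpos_of_nonpos_of_nonneg (mul_nonpos_of_nonpos_of_nonneg ?_ (h.pos x).le)
      (exp_pos _).le
    nlinarith

lemma mul_min_le_neg_div (x : ℝ) : y / 3 * min 1 ((x + y) ^ 2) ≤ -v' x / v x := by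
  have hy0 := h.center_pos
  have hmin_one : min 1 ((x + y) ^ 2) ≤ 1 := min_le_left _ _
  have hmin_sq : min 1 ((x + y) ^ 2) ≤ (x + y) ^ 2 := min_le_right _ _
  have hmin_nonneg : 0 ≤ min 1 ((x + y) ^ 2) := by positivity
  rcases le_total x (-y) with hleft | hleft
  · refine le_trans ?_ ((le_div_iff₀ (h.pos x)).2 (h.le_neg_deriv_of_le hleft))
    rw [le_div_iff₀ (by positivity)]
    nlinarith [mul_nonneg hy0.le (sq_nonneg (x + y))]
  rcases le_total x y with hright | hright
  · refine le_trans ?_ (h.le_neg_div_of_mem_Icc ⟨hleft, hright⟩)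
    nlinarith [hmin_nonneg]
  · have : x ≤ -v' x / v x := (le_div_iff₀ (h.pos x)).2 (by linarith [h.deriv_lt x])
    nlinarith

lemma neg_div_nonneg (x : ℝ) : 0 ≤ -v' x / v x :=
  le_trans (mul_nonneg (by linarith [h.center_pos]) (by positivity)) (h.mul_min_le_neg_div x)

lemma div_five_le_inv_add_mul (x : ℝ) :
    y / 5 ≤ 1 / (1 + x ^ 2) + 2 * (-v' x / v x) * (3 - arctan x) := by
  have hy0 := h.center_pos
  have hy1 := h.center_lt_one
  have hp := h.mul_min_le_neg_div x
  have hp0 := h.neg_div_nonneg x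
  have hpq := le_mul_of_one_le_right hp0 (three_sub_arctan_mem_Icc x).1
  rcases le_total ((x + y) ^ 2) 1 with hxy | hxy
  · have hx : x ^ 2 ≤ 4 := by
      obtain ⟨_, _⟩ := abs_le.1 ((sq_le_one_iff_abs_le_one _).1 hxy)
      nlinarith
    have : y / 5 ≤ 1 / (1 + x ^ 2) := by
      rw [div_le_div_iff₀ (by norm_num) (by positivity)]
      nlinarith
    linarith
  · rw [min_eq_left hxy] at hp
    have : (0 : ℝ) ≤ 1 / (1 + x ^ 2) := by positivity
    linarith

/-- The multiplier is `-v' / v - ε (3 - arctan x)` with `ε` proportional to `min 1 ((σ + y)²)`: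
`-v' / v` solves the Riccati equation with energy `y²`, and its positivity away from `-y` leaves
room for a perturbation. -/
lemma exists_riccati_multiplier (σ : ℝ) : ∃ P P' : ℝ → ℝ, (∀ x, HasDerivAt P (P' x) x) ∧
    0 ≤ P σ ∧ (∀ᶠ x in atTop, P x ≤ 1 + x ^ 2) ∧
    ∀ x, y ^ 2 + y ^ 2 / 2500 * min 1 ((σ + y) ^ 2) ≤ P' x + x ^ 2 - P x ^ 2 := by
  have hy0 := h.center_pos
  have hy1 := h.center_lt_one
  obtain ⟨ε, hε⟩ : ∃ ε, ε = y / 250 * min 1 ((σ + y) ^ 2) := ⟨_, rfl⟩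
  have hε0 : 0 ≤ ε := by rw [hε]; positivity
  have hεy : ε ≤ y / 250 := by
    rw [hε]; exact mul_le_of_le_one_right (by positivity) (min_le_left _ _)
  refine ⟨fun x => -v' x / v x - ε * (3 - arctan x),
    fun x => y ^ 2 - x ^ 2 + (-v' x / v x) ^ 2 + ε * (1 / (1 + x ^ 2)), fun x => ?_, ?_, ?_,
    fun x => ?_⟩
  · refine ((h.hasDerivAt_neg_div x).sub
      (((hasDerivAt_arctan x).const_sub 3).const_mul ε)).congr_deriv ?_
    ring
  · have := mul_le_mul_of_nonneg_left (three_sub_arctan_mem_Icc σ).2 hε0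
    linarith [h.mul_min_le_neg_div σ, hε ▸ hε0]
  · filter_upwards [eventually_ge_atTop 1] with x hx
    have := (div_le_iff₀ (h.pos x)).2 (h.neg_deriv_le hx)
    nlinarith [mul_nonneg hε0 (zero_le_one.trans (three_sub_arctan_mem_Icc x).1)]
  · have hloss : ε * (3 - arctan x) ^ 2 ≤ y / 10 := by
      obtain ⟨hq1, hq5⟩ := three_sub_arctan_mem_Icc x
      have : (3 - arctan x) ^ 2 ≤ 5 ^ 2 := pow_le_pow_left₀ (by linarith) hq5 2
      nlinarith
    have hnet := mul_le_mul_of_nonneg_left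
      (sub_le_sub (h.div_five_le_inv_add_mul x) hloss) hε0
    have : y ^ 2 / 2500 * min 1 ((σ + y) ^ 2) = ε * (y / 5 - y / 10) := by rw [hε]; ring
    linarith

end IsNeumannGroundState

end GroundState

section CompactSupport

variable {X E : Type*} [TopologicalSpace X] [NormedAddCommGroup E] {f : X → E}

lemma hasCompactSupport_norm_sq (hf : HasCompactSupport f) :
    HasCompactSupport fun x => ‖f x‖ ^ 2 :=
  hf.norm.comp_left (g := (· ^ 2)) (by simp)

variable [MeasurableSpace X] [OpensMeasurableSpace X] {ν : Measure X}
  [IsFiniteMeasureOnCompacts ν]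

lemma integrable_norm_sq_of_hasCompactSupport (hf : Continuous f) (hs : HasCompactSupport f) :
    Integrable (fun x => ‖f x‖ ^ 2) ν :=
  (hf.norm.pow 2).integrable_of_hasCompactSupport (hasCompactSupport_norm_sq hs)

lemma integrable_mul_norm_sq_of_hasCompactSupport {V : X → ℝ} (hV : Continuous V)
    (hf : Continuous f) (hs : HasCompactSupport f) : Integrable (fun x => V x * ‖f x‖ ^ 2) ν :=
  (hV.mul (hf.norm.pow 2)).integrable_of_hasCompactSupport
    (hasCompactSupport_norm_sq hs).mul_left

end CompactSupport

section Riccati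

lemma nonpos_of_eventually_le_of_integrableOn_Ioi {f : ℝ → ℝ} {a c : ℝ}
    (hf : IntegrableOn f (Ioi a)) (hc : ∀ᶠ x in atTop, c ≤ f x) : c ≤ 0 := by
  by_contra! hpos
  obtain ⟨b, hb⟩ := eventually_atTop.1 hc
  have hconst : IntegrableOn (fun _ : ℝ => c) (Ioi (max a b)) := by
    refine (hf.mono_set (Ioi_subset_Ioi (le_max_left a b))).mono' aestronglyMeasurable_const ?_
    refine (ae_restrict_mem measurableSet_Ioi).mono fun x hx => ?_
    rw [Real.norm_of_nonneg hpos.le]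
    exact hb x ((le_max_right a b).trans hx.le)
  simp [integrableOn_const_iff, hpos.ne'] at hconst

variable {F : Type*} [NormedAddCommGroup F] [InnerProductSpace ℝ F]

/-- Expand `0 ≤ ‖u' + P u‖²` and integrate by parts. The boundary term at infinity cannot be bounded
below, since it is dominated by the energy density, which is integrable. -/
lemma mul_integral_sq_le_of_riccati {e σ : ℝ} {P P' : ℝ → ℝ} {u : ℝ → F}
    (hP : ∀ x, HasDerivAt P (P' x) x) (hσ : 0 ≤ P σ) (hgrowth : ∀ᶠ x in atTop, P x ≤ 1 + x ^ 2)
    (hriccati : ∀ x, e ≤ P' x + x ^ 2 - P x ^ 2) (hu : ContDiff ℝ 1 u)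
    (hmass : IntegrableOn (fun t => ‖u t‖ ^ 2) (Ioi 0))
    (henergy : IntegrableOn (fun t => ‖deriv u t‖ ^ 2 + (t + σ) ^ 2 * ‖u t‖ ^ 2) (Ioi 0)) :
    e * ∫ t in Ioi (0 : ℝ), ‖u t‖ ^ 2
      ≤ ∫ t in Ioi (0 : ℝ), (‖deriv u t‖ ^ 2 + (t + σ) ^ 2 * ‖u t‖ ^ 2) := by
  rw [← sub_nonneg, ← integral_const_mul, ← integral_sub henergy (hmass.const_mul e)]
  have hf : IntegrableOn
      (fun t => ‖deriv u t‖ ^ 2 + (t + σ) ^ 2 * ‖u t‖ ^ 2 - e * ‖u t‖ ^ 2) (Ioi 0) :=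
    henergy.sub (hmass.const_mul e)
  have hG (t : ℝ) : HasDerivAt (fun t => -(P (t + σ) * ‖u t‖ ^ 2))
      (-(P' (t + σ) * ‖u t‖ ^ 2 + P (t + σ) * (2 * inner ℝ (u t) (deriv u t)))) t :=
    (((hP (t + σ)).comp_add_const t σ).mul
      (hu.differentiable one_ne_zero t).hasDerivAt.norm_sq).neg
  have hpointwise (t : ℝ) :
      -(P' (t + σ) * ‖u t‖ ^ 2 + P (t + σ) * (2 * inner ℝ (u t) (deriv u t)))
        ≤ ‖deriv u t‖ ^ 2 + (t + σ) ^ 2 * ‖u t‖ ^ 2 - e * ‖u t‖ ^ 2 := by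
    have hsq := sq_nonneg ‖deriv u t + P (t + σ) • u t‖
    rw [norm_add_sq_real, real_inner_smul_right, norm_smul, mul_pow, Real.norm_eq_abs, sq_abs,
      real_inner_comm] at hsq
    nlinarith [mul_le_mul_of_nonneg_right (hriccati (t + σ)) (sq_nonneg ‖u t‖)]
  have hpartial : ∀ T ≥ 0, -(P (T + σ) * ‖u T‖ ^ 2)
      ≤ ∫ t in (0)..T, (‖deriv u t‖ ^ 2 + (t + σ) ^ 2 * ‖u t‖ ^ 2 - e * ‖u t‖ ^ 2) := fun T hT => by
    have := intervalIntegral.sub_le_integral_of_hasDeriv_right_of_le hT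
      (fun t _ => (hG t).continuousAt.continuousWithinAt) (fun t _ => (hG t).hasDerivWithinAt)
      (integrableOn_Icc_iff_integrableOn_Ioc (by simp) |>.2 (hf.mono_set Ioc_subset_Ioi_self))
      (fun t _ => hpointwise t)
    have hG0 : 0 ≤ P (0 + σ) * ‖u 0‖ ^ 2 := by rw [zero_add]; positivity
    exact le_trans (by linarith) this
  by_contra! hneg
  have hlim := intervalIntegral_tendsto_integral_Ioi 0 hf tendsto_id
  generalize (∫ t in Ioi (0 : ℝ), _ : ℝ) = I at hneg hlim
  suffices -I / 2 ≤ 0 by linarith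
  refine nonpos_of_eventually_le_of_integrableOn_Ioi (hmass.add henergy) ?_
  filter_upwards [hlim.eventually (gt_mem_nhds (by linarith : I < I / 2)), eventually_ge_atTop 0,
    (tendsto_atTop_add_const_right atTop σ tendsto_id).eventually hgrowth] with T hT hT0 hPT
  have := hpartial T hT0
  simp only [id, Pi.add_apply] at hT hPT ⊢
  nlinarith [mul_le_mul_of_nonneg_right hPT (sq_nonneg ‖u T‖), sq_nonneg ‖deriv u T‖]

end Riccati

section DeGennes

variable {ξ : ℝ}

lemma deGennes_nonneg (ξ : ℝ) : 0 ≤ deGennes ξ := by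
  refine Real.sInf_nonneg ?_
  rintro _ ⟨u, -, -, -, -, rfl⟩
  exact div_nonneg (integral_nonneg fun t => by positivity) (integral_nonneg fun t => by positivity)

lemma Theta0_le_deGennes (ξ : ℝ) : Theta0 ≤ deGennes ξ :=
  ciInf_le ⟨0, forall_mem_range.2 deGennes_nonneg⟩ ξ

lemma deGennes_mul_integral_le {u : ℝ → ℂ} (hu : ContDiff ℝ 1 u)
    (hmass : IntegrableOn (fun t => ‖u t‖ ^ 2) (Ioi 0))
    (henergy : IntegrableOn (fun t => ‖deriv u t‖ ^ 2 + (t + ξ) ^ 2 * ‖u t‖ ^ 2) (Ioi 0)) :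
    deGennes ξ * ∫ t in Ioi (0 : ℝ), ‖u t‖ ^ 2
      ≤ ∫ t in Ioi (0 : ℝ), (‖deriv u t‖ ^ 2 + (t + ξ) ^ 2 * ‖u t‖ ^ 2) := by
  have hmass_nonneg : 0 ≤ ∫ t in Ioi (0 : ℝ), ‖u t‖ ^ 2 := integral_nonneg fun t => by positivity
  rcases hmass_nonneg.eq_or_lt with h | h
  · rw [← h, mul_zero]
    exact integral_nonneg fun t => by positivity
  · rw [← le_div_iff₀ h]
    refine csInf_le ⟨0, ?_⟩ ⟨u, hu, hmass, henergy, h, rfl⟩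
    rintro _ ⟨u, -, -, -, hu, rfl⟩
    exact div_nonneg (integral_nonneg fun t => by positivity) hu.le

lemma le_deGennes {e : ℝ} (h : ∀ u : ℝ → ℂ, ContDiff ℝ 1 u →
    IntegrableOn (fun t => ‖u t‖ ^ 2) (Ioi 0) →
    IntegrableOn (fun t => ‖deriv u t‖ ^ 2 + (t + ξ) ^ 2 * ‖u t‖ ^ 2) (Ioi 0) →
    e * ∫ t in Ioi (0 : ℝ), ‖u t‖ ^ 2
      ≤ ∫ t in Ioi (0 : ℝ), (‖deriv u t‖ ^ 2 + (t + ξ) ^ 2 * ‖u t‖ ^ 2)) :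
    e ≤ deGennes ξ := by
  refine le_csInf ?_ fun _ ⟨u, hu, hmass, henergy, hpos, hq⟩ =>
    hq ▸ (le_div_iff₀ hpos).2 (h u hu hmass henergy)
  let χ : ContDiffBump (1 : ℝ) := ⟨1 / 4, 1 / 2, by norm_num, by norm_num⟩
  let u : ℝ → ℂ := fun t => (χ t : ℂ)
  have hu : ContDiff ℝ 1 u := Complex.ofRealCLM.contDiff.comp χ.contDiff
  have hsupp : HasCompactSupport u := χ.hasCompactSupport.comp_left (g := fun x : ℝ => (x : ℂ)) rfl
  have hmass := integrable_norm_sq_of_hasCompactSupport (ν := volume) hu.continuous hsupp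
  have henergy := (integrable_norm_sq_of_hasCompactSupport (ν := volume)
    (hu.continuous_deriv le_rfl) hsupp.deriv).add
    (integrable_mul_norm_sq_of_hasCompactSupport (V := fun t => (t + ξ) ^ 2) (by fun_prop)
      hu.continuous hsupp)
  refine ⟨_, u, hu, hmass.integrableOn, henergy.integrableOn, ?_, rfl⟩
  have hball : Metric.ball (1 : ℝ) (1 / 2) ⊆ (Function.support fun t => ‖u t‖ ^ 2) ∩ Ioi 0 := by
    intro t ht
    refine ⟨by simpa [u] using (χ.pos_of_mem_ball ht).ne', ?_⟩
    rw [Metric.mem_ball, Real.dist_eq, abs_lt] at ht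
    simp only [mem_Ioi]
    linarith
  rw [setIntegral_pos_iff_support_of_nonneg_ae (Eventually.of_forall fun t => by positivity)
    hmass.integrableOn]
  exact (Metric.measure_ball_pos volume 1 (by norm_num)).trans_le (measure_mono hball)

namespace IsNeumannGroundState

variable {y : ℝ} {v v' : ℝ → ℝ} (h : IsNeumannGroundState y v v')
include h

lemma sq_le_exp {x : ℝ} (hx : -y ≤ x) :
    v x ^ 2 ≤ (v (-y) * exp (y ^ 2 / 2)) ^ 2 * exp (-x ^ 2) := by
  have hderiv (x : ℝ) : HasDerivAt (fun x => v x * exp (x ^ 2 / 2))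
      ((v' x + x * v x) * exp (x ^ 2 / 2)) x := by
    refine ((h.hasDerivAt x).mul (((hasDerivAt_id x).pow 2).div_const 2).exp).congr_deriv ?_
    simp only [Pi.pow_apply, id_eq, Nat.cast_ofNat, Nat.add_one_sub_one, pow_one, mul_one, ne_eq,
      OfNat.ofNat_ne_zero, not_false_eq_true, mul_div_cancel_left₀]
    ring
  have hanti : Antitone fun x => v x * exp (x ^ 2 / 2) :=
    antitone_of_hasDerivAt_nonpos hderiv fun x =>
      mul_nonpos_of_nonpos_of_nonneg (by linarith [h.deriv_lt x]) (exp_pos _).le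
  have hle := hanti hx
  simp only [neg_sq] at hle
  rw [← le_div_iff₀ (exp_pos _), div_eq_mul_inv, ← Real.exp_neg] at hle
  refine (pow_le_pow_left₀ (h.pos x).le hle 2).trans_eq ?_
  rw [mul_pow, ← Real.exp_nat_mul (-(x ^ 2 / 2))]
  congr 2
  push_cast
  ring

lemma integrableOn_sq : IntegrableOn (fun t => v (t + -y) ^ 2) (Ioi 0) := by
  have hgauss : Integrable fun x : ℝ => (v (-y) * exp (y ^ 2 / 2)) ^ 2 * exp (-x ^ 2) := by
    simpa using (integrable_exp_neg_mul_sq one_pos).const_mul _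
  refine (hgauss.comp_add_right (-y)).integrableOn.mono'
    ((h.continuous.comp (by fun_prop)).pow 2).aestronglyMeasurable ?_
  refine (ae_restrict_mem measurableSet_Ioi).mono fun t (ht : 0 < t) => ?_
  rw [Real.norm_of_nonneg (sq_nonneg _)]
  exact h.sq_le_exp (by linarith)

lemma intervalIntegral_energy_le {T : ℝ} (hT : y ≤ T) :
    ∫ t in (0)..T, (v' (t + -y) ^ 2 + (t + -y) ^ 2 * v (t + -y) ^ 2)
      ≤ y ^ 2 * ∫ t in Ioi (0 : ℝ), v (t + -y) ^ 2 := by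
  have := h.continuous
  have := h.continuous'
  have hderiv (t : ℝ) : HasDerivAt (fun t => v (t + -y) * v' (t + -y))
      ((v' (t + -y) ^ 2 + (t + -y) ^ 2 * v (t + -y) ^ 2) - y ^ 2 * v (t + -y) ^ 2) t := by
    refine (((h.hasDerivAt (t + -y)).comp_add_const t (-y)).mul
      ((h.hasDerivAt' (t + -y)).comp_add_const t (-y))).congr_deriv ?_
    ring
  have hFTC := intervalIntegral.integral_eq_sub_of_hasDerivAt (a := 0) (b := T)
    (fun t _ => hderiv t) (Continuous.intervalIntegrable (by fun_prop) _ _)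
  rw [intervalIntegral.integral_sub (Continuous.intervalIntegrable (by fun_prop) _ _)
    (Continuous.intervalIntegrable (by fun_prop) _ _), intervalIntegral.integral_const_mul,
    zero_add, h.neumann, mul_zero, sub_zero] at hFTC
  have hboundary : v (T + -y) * v' (T + -y) ≤ 0 :=
    mul_nonpos_of_nonneg_of_nonpos (h.pos _).le
      ((h.deriv_lt _).le.trans (by nlinarith [h.pos (T + -y)]))
  have hmass : ∫ t in (0)..T, v (t + -y) ^ 2 ≤ ∫ t in Ioi (0 : ℝ), v (t + -y) ^ 2 := by
    rw [intervalIntegral.integral_of_le (h.center_pos.le.trans hT)]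
    exact setIntegral_mono_set h.integrableOn_sq (Eventually.of_forall fun t => sq_nonneg _)
      Ioc_subset_Ioi_self.eventuallyLE
  nlinarith [sq_nonneg y]

lemma deGennes_neg_le : deGennes (-y) ≤ y ^ 2 := by
  have hv := h.continuous
  have hv' := h.continuous'
  have hderiv (t : ℝ) : HasDerivAt (fun t => (v (t + -y) : ℂ)) (v' (t + -y) : ℂ) t :=
    ((h.hasDerivAt (t + -y)).comp_add_const t (-y)).ofReal_comp
  have hderiv_eq := funext fun t => (hderiv t).deriv
  have hnorm (r : ℝ) : ‖(r : ℂ)‖ ^ 2 = r ^ 2 := by rw [Complex.norm_real, Real.norm_eq_abs, sq_abs]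
  have henergy :
      IntegrableOn (fun t => v' (t + -y) ^ 2 + (t + -y) ^ 2 * v (t + -y) ^ 2) (Ioi 0) := by
    refine integrableOn_Ioi_of_intervalIntegral_norm_bounded
      (y ^ 2 * ∫ t in Ioi (0 : ℝ), v (t + -y) ^ 2) 0
      (fun T => (Continuous.integrableOn_Icc (by fun_prop)).mono_set Ioc_subset_Icc_self)
      tendsto_id ((eventually_ge_atTop y).mono fun T hT => ?_)
    simp only [Real.norm_of_nonneg (add_nonneg (sq_nonneg (v' _))
      (mul_nonneg (sq_nonneg (_ : ℝ)) (sq_nonneg (v _))))]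
    exact h.intervalIntegral_energy_le hT
  have hle := le_of_tendsto (intervalIntegral_tendsto_integral_Ioi 0 henergy tendsto_id)
    ((eventually_ge_atTop y).mono fun T hT => h.intervalIntegral_energy_le hT)
  have hmass_pos : 0 < ∫ t in Ioi (0 : ℝ), v (t + -y) ^ 2 := by
    rw [setIntegral_pos_iff_support_of_nonneg_ae (Eventually.of_forall fun t => sq_nonneg _)
      h.integrableOn_sq]
    simp [Function.support, (h.pos _).ne']
  have hdeGennes := deGennes_mul_integral_le (ξ := -y) (u := fun t => (v (t + -y) : ℂ))
    (contDiff_one_iff_deriv.2 ⟨fun t => (hderiv t).differentiableAt, by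
      rw [hderiv_eq]; fun_prop⟩)
    (by simpa only [hnorm] using h.integrableOn_sq)
    (by simpa only [hderiv_eq, hnorm] using henergy)
  simp only [hderiv_eq, hnorm] at hdeGennes
  exact le_of_mul_le_mul_right (hdeGennes.trans hle) hmass_pos

end IsNeumannGroundState

theorem exists_Theta0_add_le_deGennes :
    ∃ ξ₀ c : ℝ, 0 < c ∧ ∀ ξ, Theta0 + c * min 1 ((ξ - ξ₀) ^ 2) ≤ deGennes ξ := by
  obtain ⟨y, v, v', h⟩ := exists_isNeumannGroundState
  refine ⟨-y, y ^ 2 / 2500, by have := h.center_pos; positivity, fun ξ => ?_⟩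
  obtain ⟨P, P', hP, hξ, hgrowth, hriccati⟩ := h.exists_riccati_multiplier ξ
  have hground := (Theta0_le_deGennes (-y)).trans h.deGennes_neg_le
  rw [sub_neg_eq_add]
  exact le_trans (by linarith) (le_deGennes fun u hu hmass henergy =>
    mul_integral_sq_le_of_riccati hP hξ hgrowth hriccati hu hmass henergy)

end DeGennes

section Well

variable {F : Type*} [NormedAddCommGroup F] [InnerProductSpace ℝ F] {u : ℝ → F}

lemma mul_integral_sq_le_of_add_sq_le {μ : ℝ} {U W W' : ℝ → ℝ} (hU : Continuous U)
    (hW : ∀ x, HasDerivAt W (W' x) x) (hW' : Continuous W')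
    (hle : ∀ x, μ + W x ^ 2 ≤ U x + W' x) (hu : ContDiff ℝ 1 u) (hsupp : HasCompactSupport u) :
    μ * ∫ x, ‖u x‖ ^ 2 ≤ ∫ x, (‖deriv u x‖ ^ 2 + U x * ‖u x‖ ^ 2) := by
  have hWc : Continuous W := continuous_iff_continuousAt.2 fun x => (hW x).continuousAt
  have hdu := hu.continuous_deriv le_rfl
  have hsq := hasCompactSupport_norm_sq hsupp
  have hcross : HasCompactSupport fun x => 2 * inner ℝ (u x) (deriv u x) :=
    hsupp.mono fun x hx => by contrapose! hx; simp_all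
  have hderiv (x : ℝ) : HasDerivAt (fun x => W x * ‖u x‖ ^ 2)
      (W' x * ‖u x‖ ^ 2 + W x * (2 * inner ℝ (u x) (deriv u x))) x :=
    (hW x).mul (hu.differentiable one_ne_zero x).hasDerivAt.norm_sq
  have hint := (integrable_norm_sq_of_hasCompactSupport (ν := volume) hu.continuous
    hsupp).const_mul μ
  have hint' := (by fun_prop : Continuous fun x =>
      W' x * ‖u x‖ ^ 2 + W x * (2 * inner ℝ (u x) (deriv u x)))
    |>.integrable_of_hasCompactSupport (μ := volume) (hsq.mul_left.add hcross.mul_left)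
  have hzero := integral_eq_zero_of_hasDerivAt_of_integrable hderiv hint'
    (integrable_mul_norm_sq_of_hasCompactSupport hWc hu.continuous hsupp)
  rw [← integral_const_mul, ← sub_zero (∫ x, μ * ‖u x‖ ^ 2), ← hzero, ← integral_sub hint hint']
  refine integral_mono (hint.sub hint')
    ((integrable_norm_sq_of_hasCompactSupport hdu hsupp.deriv).add
      (integrable_mul_norm_sq_of_hasCompactSupport hU hu.continuous hsupp)) fun x => ?_
  have hexpand := sq_nonneg ‖deriv u x + W x • u x‖
  rw [norm_add_sq_real, real_inner_smul_right, norm_smul, mul_pow, Real.norm_eq_abs, sq_abs,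
    real_inner_comm] at hexpand
  have := mul_le_mul_of_nonneg_right (hle x) (sq_nonneg ‖u x‖)
  simp only
  linarith

lemma abs_arctan_le_two (x : ℝ) : |arctan x| ≤ 2 :=
  abs_le.2 ⟨by linarith [neg_pi_div_two_lt_arctan x, pi_lt_four],
    by linarith [arctan_lt_pi_div_two x, pi_lt_four]⟩

lemma arctan_mul_self_eq_abs (x : ℝ) : arctan x * x = arctan |x| * |x| := by
  rcases abs_cases x with ⟨h, _⟩ | ⟨h, _⟩ <;> rw [h]
  rw [arctan_neg, neg_mul_neg]

lemma arctan_mul_self_nonneg (x : ℝ) : 0 ≤ arctan x * x := by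
  rw [arctan_mul_self_eq_abs]
  exact mul_nonneg (arctan_nonneg.2 (abs_nonneg x)) (abs_nonneg x)

lemma half_abs_le_arctan_mul_self {x : ℝ} (hx : 1 ≤ |x|) : |x| / 2 ≤ arctan x * x := by
  have harctan : arctan 1 ≤ arctan |x| := arctan_strictMono.monotone hx
  rw [arctan_one] at harctan
  rw [arctan_mul_self_eq_abs]
  nlinarith [pi_gt_three]

/-- When `δ` is very negative, the well `(δ + ρ²/2)²` is confined to large `|ρ|`, where `δ + ρ²/2`
varies rapidly; there `ρ arctan ρ / (1 + (δ + ρ²/2)²)`, a part of the derivative of the multiplier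
`arctan ρ * arctan (δ + ρ²/2)`, supplies the missing confinement. -/
lemma add_sq_le_min_add_deriv_arctan_mul_arctan {c μ K δ : ℝ} (hc : 0 ≤ c) (hμ : 0 ≤ μ)
    (hK : 0 ≤ K) (hcK : μ + 18 ≤ c * K)
    (hδ : δ ≤ -(1 + K + 2 * ((1 + K) * (μ + 18)) ^ 2)) (ρ : ℝ) :
    μ + (arctan ρ * arctan (δ + ρ ^ 2 / 2)) ^ 2 ≤ c * min K ((δ + ρ ^ 2 / 2) ^ 2)
      + (1 / (1 + ρ ^ 2) * arctan (δ + ρ ^ 2 / 2)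
        + arctan ρ * (1 / (1 + (δ + ρ ^ 2 / 2) ^ 2) * ρ)) := by
  obtain ⟨x, hx⟩ : ∃ x, x = δ + ρ ^ 2 / 2 := ⟨_, rfl⟩
  rw [← hx]
  have hsq : (arctan ρ * arctan x) ^ 2 ≤ 16 := by
    rw [← sq_abs, abs_mul]
    calc (|arctan ρ| * |arctan x|) ^ 2 ≤ (2 * 2) ^ 2 := by gcongr <;> exact abs_arctan_le_two _
      _ = 16 := by norm_num
  have hfirst : -2 ≤ 1 / (1 + ρ ^ 2) * arctan x := by
    have : |1 / (1 + ρ ^ 2) * arctan x| ≤ 1 * 2 := by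
      rw [abs_mul, abs_of_nonneg (by positivity)]
      gcongr
      · exact div_le_one_of_le₀ (by nlinarith) (by positivity)
      · exact abs_arctan_le_two x
    linarith [neg_le_of_abs_le this]
  have hsecond_eq : arctan ρ * (1 / (1 + x ^ 2) * ρ) = arctan ρ * ρ / (1 + x ^ 2) := by ring
  rw [hsecond_eq]
  rcases le_total K (x ^ 2) with hKx | hKx
  · rw [min_eq_left hKx]
    have : 0 ≤ arctan ρ * ρ / (1 + x ^ 2) :=
      div_nonneg (arctan_mul_self_nonneg ρ) (by positivity)
    linarith
  · have hρ : 2 * ((1 + K) * (μ + 18)) ≤ |ρ| := by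
      refine le_of_sq_le_sq ?_ (abs_nonneg ρ)
      rw [sq_abs]
      nlinarith [sq_nonneg (x + 1)]
    have hsecond : μ + 18 ≤ arctan ρ * ρ / (1 + x ^ 2) := by
      rw [le_div_iff₀ (by positivity)]
      nlinarith [half_abs_le_arctan_mul_self (x := ρ) (by nlinarith)]
    have : 0 ≤ c * min K (x ^ 2) := by positivity
    linarith

theorem exists_mul_setIntegral_sq_le_well {c μ : ℝ} (hc : 0 < c) (hμ : 0 ≤ μ) :
    ∃ K R : ℝ, ∀ (δ : ℝ) (u : ℝ → F), ContDiff ℝ 1 u → HasCompactSupport u →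
      μ * ∫ ρ in {ρ | R ≤ |ρ|}, ‖u ρ‖ ^ 2
        ≤ ∫ ρ, (‖deriv u ρ‖ ^ 2 + c * min K ((δ + ρ ^ 2 / 2) ^ 2) * ‖u ρ‖ ^ 2) := by
  obtain ⟨K, hK⟩ : ∃ K, K = (μ + 18) / c := ⟨_, rfl⟩
  have hK0 : 0 ≤ K := by rw [hK]; positivity
  have hcK : c * K = μ + 18 := by rw [hK]; field_simp
  obtain ⟨A, hA⟩ : ∃ A, A = 1 + K + 2 * ((1 + K) * (μ + 18)) ^ 2 := ⟨_, rfl⟩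
  refine ⟨K, A + 1 + K, fun δ u hu hsupp => ?_⟩
  have hint := integrable_norm_sq_of_hasCompactSupport (ν := volume) hu.continuous hsupp
  rcases le_total δ (-A) with hδ | hδ
  · have hx (ρ : ℝ) : HasDerivAt (fun ρ : ℝ => δ + ρ ^ 2 / 2) ρ ρ := by
      refine ((((hasDerivAt_id ρ).pow 2).div_const 2).const_add δ).congr_deriv ?_
      simp
    refine le_trans ?_ (mul_integral_sq_le_of_add_sq_le (by fun_prop)
      (fun ρ => (hasDerivAt_arctan ρ).mul (hx ρ).arctan) ?_
      (add_sq_le_min_add_deriv_arctan_mul_arctan hc.le hμ hK0 hcK.ge (hA ▸ hδ)) hu hsupp)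
    · exact mul_le_mul_of_nonneg_left
        (setIntegral_le_integral hint (Eventually.of_forall fun ρ => sq_nonneg _)) hμ
    · fun_prop (disch := intro; positivity)
  · have hint' : Integrable fun ρ =>
        ‖deriv u ρ‖ ^ 2 + c * min K ((δ + ρ ^ 2 / 2) ^ 2) * ‖u ρ‖ ^ 2 :=
      (integrable_norm_sq_of_hasCompactSupport (hu.continuous_deriv le_rfl) hsupp.deriv).add
        (integrable_mul_norm_sq_of_hasCompactSupport (by fun_prop) hu.continuous hsupp)
    rw [← integral_const_mul]
    refine (setIntegral_mono_on (hint.const_mul μ).integrableOn hint'.integrableOn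
      (measurableSet_le measurable_const measurable_norm) fun ρ hρ => ?_).trans
        (setIntegral_le_integral hint' (Eventually.of_forall fun ρ => by positivity))
    have hwell : K ≤ (δ + ρ ^ 2 / 2) ^ 2 := by
      have hρ : (A + 1 + K) ^ 2 ≤ ρ ^ 2 := by
        rw [← sq_abs ρ]; exact pow_le_pow_left₀ (by rw [hA]; positivity) hρ 2
      have hx : 1 + K ≤ δ + ρ ^ 2 / 2 := by
        nlinarith [sq_nonneg ((1 + K) * (μ + 18))]
      nlinarith
    rw [min_eq_left hwell, hcK]
    nlinarith [sq_nonneg ‖u ρ‖, sq_nonneg ‖deriv u ρ‖]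

end Well

lemma measurableSet_halfPlane : MeasurableSet halfPlane :=
  measurableSet_Ioi.prod .univ

lemma volume_restrict_halfPlane : (volume : Measure (ℝ × ℝ)).restrict halfPlane =
    (volume.restrict (Ioi (0 : ℝ))).prod (volume : Measure ℝ) := by
  rw [halfPlane, Measure.volume_eq_prod, ← Measure.prod_restrict, Measure.restrict_univ]

section HalfPlane

variable {E : Type*} [NormedAddCommGroup E]

lemma integrableOn_of_hasCompactSupport {f : ℝ × ℝ → E} {s : Set (ℝ × ℝ)} (hf : Continuous f)
    (hs : HasCompactSupport f) : IntegrableOn f s :=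
  (hf.integrable_of_hasCompactSupport hs).integrableOn

lemma hasCompactSupport_slice_fst {f : ℝ × ℝ → E} (hf : HasCompactSupport f) (ρ : ℝ) :
    HasCompactSupport fun τ => f (τ, ρ) :=
  hf.comp_isClosedEmbedding (g := fun τ => (τ, ρ))
    (Function.LeftInverse.isClosedEmbedding (f := Prod.fst) (fun _ => rfl) continuous_fst
      (by fun_prop))

lemma hasCompactSupport_slice_snd {f : ℝ × ℝ → E} (hf : HasCompactSupport f) (τ : ℝ) :
    HasCompactSupport fun ρ => f (τ, ρ) :=
  hf.comp_isClosedEmbedding (g := fun ρ => (τ, ρ))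
    (Function.LeftInverse.isClosedEmbedding (f := Prod.snd) (fun _ => rfl) continuous_snd
      (by fun_prop))

variable [NormedSpace ℝ E]

lemma continuous_fderiv_apply_const {f : ℝ × ℝ → E} (hf : ContDiff ℝ 1 f) (w : ℝ × ℝ) :
    Continuous fun p => fderiv ℝ f p w :=
  (hf.continuous_fderiv one_ne_zero).clm_apply continuous_const

lemma deriv_slice_fst {f : ℝ × ℝ → E} (hf : ContDiff ℝ 1 f) (τ ρ : ℝ) :
    deriv (fun s => f (s, ρ)) τ = fderiv ℝ f (τ, ρ) (1, 0) :=
  (((hf.differentiable one_ne_zero) (τ, ρ)).hasFDerivAt.comp_hasDerivAt τ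
    ((hasDerivAt_id τ).prodMk (hasDerivAt_const τ ρ))).deriv

lemma deriv_slice_snd {f : ℝ × ℝ → E} (hf : ContDiff ℝ 1 f) (τ ρ : ℝ) :
    deriv (fun s => f (τ, s)) ρ = fderiv ℝ f (τ, ρ) (0, 1) :=
  (((hf.differentiable one_ne_zero) (τ, ρ)).hasFDerivAt.comp_hasDerivAt ρ
    ((hasDerivAt_const ρ τ).prodMk (hasDerivAt_id ρ))).deriv

lemma setIntegral_halfPlane {f : ℝ × ℝ → E} (hf : IntegrableOn f halfPlane) :
    ∫ p in halfPlane, f p = ∫ τ in Ioi (0 : ℝ), ∫ ρ, f (τ, ρ) := by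
  rw [IntegrableOn, volume_restrict_halfPlane] at hf
  rw [volume_restrict_halfPlane, integral_prod _ hf]

lemma setIntegral_halfPlane_symm {f : ℝ × ℝ → E} (hf : IntegrableOn f halfPlane) :
    ∫ p in halfPlane, f p = ∫ ρ, ∫ τ in Ioi (0 : ℝ), f (τ, ρ) := by
  rw [IntegrableOn, volume_restrict_halfPlane] at hf
  rw [volume_restrict_halfPlane, integral_prod_symm _ hf]

lemma setIntegral_halfPlane_mono {f g : ℝ × ℝ → ℝ} (hf : IntegrableOn f halfPlane)
    (hg : IntegrableOn g halfPlane) (h : ∀ τ, ∫ ρ, f (τ, ρ) ≤ ∫ ρ, g (τ, ρ)) :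
    ∫ p in halfPlane, f p ≤ ∫ p in halfPlane, g p := by
  rw [setIntegral_halfPlane hf, setIntegral_halfPlane hg]
  rw [IntegrableOn, volume_restrict_halfPlane] at hf hg
  exact integral_mono hf.integral_prod_left hg.integral_prod_left h

lemma setIntegral_halfPlane_mono_symm {f g : ℝ × ℝ → ℝ} (hf : IntegrableOn f halfPlane)
    (hg : IntegrableOn g halfPlane)
    (h : ∀ ρ, ∫ τ in Ioi (0 : ℝ), f (τ, ρ) ≤ ∫ τ in Ioi (0 : ℝ), g (τ, ρ)) :
    ∫ p in halfPlane, f p ≤ ∫ p in halfPlane, g p := by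
  rw [setIntegral_halfPlane_symm hf, setIntegral_halfPlane_symm hg]
  rw [IntegrableOn, volume_restrict_halfPlane] at hf hg
  exact integral_mono hf.integral_prod_right hg.integral_prod_right h

lemma setIntegral_halfPlane_fderiv_fst_eq_zero [CompleteSpace E] {G : ℝ × ℝ → E}
    (hG : ContDiff ℝ 1 G) (hs : HasCompactSupport G) (h0 : ∀ ρ, G (0, ρ) = 0) :
    ∫ p in halfPlane, fderiv ℝ G p (1, 0) = 0 := by
  rw [setIntegral_halfPlane_symm (integrableOn_of_hasCompactSupport
    (continuous_fderiv_apply_const hG _) (hs.fderiv_apply ℝ _))]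
  refine integral_eq_zero_of_ae (.of_forall fun ρ => ?_)
  simp only [← deriv_slice_fst hG, Pi.zero_apply]
  rw [HasCompactSupport.integral_Ioi_deriv_eq (by fun_prop) (hasCompactSupport_slice_fst hs ρ),
    h0, neg_zero]

lemma setIntegral_halfPlane_fderiv_snd_eq_zero {G : ℝ × ℝ → E}
    (hG : ContDiff ℝ 1 G) (hs : HasCompactSupport G) :
    ∫ p in halfPlane, fderiv ℝ G p (0, 1) = 0 := by
  rw [setIntegral_halfPlane (integrableOn_of_hasCompactSupport
    (continuous_fderiv_apply_const hG _) (hs.fderiv_apply ℝ _))]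
  refine integral_eq_zero_of_ae (.of_forall fun τ => ?_)
  have hGτ : ContDiff ℝ 1 fun ρ => G (τ, ρ) := by fun_prop
  have hsτ := hasCompactSupport_slice_snd hs τ
  simp only [← deriv_slice_snd hG, Pi.zero_apply]
  exact integral_eq_zero_of_hasDerivAt_of_integrable
    (fun ρ => (hGτ.differentiable one_ne_zero ρ).hasDerivAt)
    ((hGτ.continuous_deriv le_rfl).integrable_of_hasCompactSupport hsτ.deriv)
    (hGτ.continuous.integrable_of_hasCompactSupport hsτ)

end HalfPlane

section Coercivity

variable {B : ℝ}

lemma rpow_neg_sixth_sq (hB : 0 < B) : (B ^ (-(1 : ℝ) / 6)) ^ 2 = B ^ (-(1 : ℝ) / 3) := by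
  rw [← rpow_natCast, ← rpow_mul hB.le]
  norm_num

lemma continuous_qPot (B : ℝ) (m : ℤ) : Continuous (qPot B m) := by
  unfold qPot
  fun_prop

lemma qPot_eq_sq (hB : 0 < B) (m : ℤ) (ξ₀ : ℝ) (p : ℝ × ℝ) : qPot B m p =
    (p.1 + (ξ₀ + B ^ (-(1 : ℝ) / 6) * (delta1 B m ξ₀ + p.2 ^ 2 / 2))) ^ 2 := by
  have hmul : B ^ (-(1 : ℝ) / 6) * B ^ ((1 : ℝ) / 6) = 1 := by
    rw [← rpow_add hB]
    norm_num
  have hdelta : B ^ (-(1 : ℝ) / 6) * delta1 B m ξ₀ = ((m : ℝ) - B / 2) / √B - ξ₀ := by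
    unfold delta1
    linear_combination (((m : ℝ) - B / 2) / √B - ξ₀) * hmul
  rw [mul_add, hdelta, qPot]
  ring

lemma Theta0_add_well_le_deGennes {c ξ₀ K h : ℝ} (hc : 0 ≤ c)
    (hgap : ∀ ξ, Theta0 + c * min 1 ((ξ - ξ₀) ^ 2) ≤ deGennes ξ) (hK : h ^ 2 * K ≤ 1) (x : ℝ) :
    Theta0 + h ^ 2 * (c * min K (x ^ 2)) ≤ deGennes (ξ₀ + h * x) := by
  have hmin : h ^ 2 * min K (x ^ 2) ≤ min 1 ((ξ₀ + h * x - ξ₀) ^ 2) := by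
    rw [mul_min_of_nonneg _ _ (sq_nonneg h), add_sub_cancel_left, mul_pow]
    exact min_le_min_right _ hK
  linarith [hgap (ξ₀ + h * x), mul_le_mul_of_nonneg_left hmin hc]

lemma integrableOn_fderiv_sq_add_qPot {φ : ℝ × ℝ → ℂ} (hφ : ContDiff ℝ 1 φ)
    (hs : HasCompactSupport φ) (B : ℝ) (m : ℤ) :
    IntegrableOn (fun p => ‖fderiv ℝ φ p (1, 0)‖ ^ 2 + qPot B m p * ‖φ p‖ ^ 2) halfPlane :=
  (integrable_norm_sq_of_hasCompactSupport (continuous_fderiv_apply_const hφ _)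
    (hs.fderiv_apply ℝ _)).add
    (integrable_mul_norm_sq_of_hasCompactSupport (continuous_qPot B m) hφ.continuous hs)

lemma integrableOn_qIntegrand {φ : ℝ × ℝ → ℂ} (hφ : ContDiff ℝ 1 φ)
    (hs : HasCompactSupport φ) (B : ℝ) (m : ℤ) : IntegrableOn (qIntegrand B m φ) halfPlane :=
  (integrableOn_fderiv_sq_add_qPot hφ hs B m).add ((integrable_norm_sq_of_hasCompactSupport
    (continuous_fderiv_apply_const hφ _) (hs.fderiv_apply ℝ _)).const_mul _)

lemma qForm_eq_add_mul {φ : ℝ × ℝ → ℂ} (hφ : ContDiff ℝ 1 φ) (hs : HasCompactSupport φ)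
    (B : ℝ) (m : ℤ) : qForm B m φ =
      (∫ p in halfPlane, (‖fderiv ℝ φ p (1, 0)‖ ^ 2 + qPot B m p * ‖φ p‖ ^ 2)) +
        B ^ (-(1 : ℝ) / 3) * ∫ p in halfPlane, ‖fderiv ℝ φ p (0, 1)‖ ^ 2 := by
  unfold qForm qIntegrand
  rw [integral_add (integrableOn_fderiv_sq_add_qPot hφ hs B m)
    ((integrable_norm_sq_of_hasCompactSupport (continuous_fderiv_apply_const hφ _)
      (hs.fderiv_apply ℝ _)).const_mul _), integral_const_mul]

lemma Theta0_mul_add_well_le {c ξ₀ K : ℝ} (hc : 0 ≤ c)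
    (hgap : ∀ ξ, Theta0 + c * min 1 ((ξ - ξ₀) ^ 2) ≤ deGennes ξ) (hB : 0 < B)
    (hK : B ^ (-(1 : ℝ) / 3) * K ≤ 1) (m : ℤ) {φ : ℝ × ℝ → ℂ} (hφ : ContDiff ℝ 1 φ)
    (hs : HasCompactSupport φ) :
    Theta0 * (∫ p in halfPlane, ‖φ p‖ ^ 2) + B ^ (-(1 : ℝ) / 3) *
        ∫ p in halfPlane, c * min K ((delta1 B m ξ₀ + p.2 ^ 2 / 2) ^ 2) * ‖φ p‖ ^ 2 ≤
      ∫ p in halfPlane, (‖fderiv ℝ φ p (1, 0)‖ ^ 2 + qPot B m p * ‖φ p‖ ^ 2) := by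
  have hcont := hφ.continuous
  have hmass : IntegrableOn (fun p => Theta0 * ‖φ p‖ ^ 2) halfPlane :=
    (integrable_norm_sq_of_hasCompactSupport hcont hs).const_mul _
  have hwell : IntegrableOn (fun p => B ^ (-(1 : ℝ) / 3) *
      (c * min K ((delta1 B m ξ₀ + p.2 ^ 2 / 2) ^ 2) * ‖φ p‖ ^ 2)) halfPlane :=
    (integrable_mul_norm_sq_of_hasCompactSupport (by fun_prop) hcont hs).const_mul _
  rw [← integral_const_mul, ← integral_const_mul, ← integral_add hmass hwell]
  refine setIntegral_halfPlane_mono_symm (hmass.add hwell)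
    (integrableOn_fderiv_sq_add_qPot hφ hs B m) fun ρ => ?_
  have hslice : ContDiff ℝ 1 fun τ => φ (τ, ρ) := by fun_prop
  have hslice_supp := hasCompactSupport_slice_fst hs ρ
  simp only [← mul_assoc, ← add_mul, integral_const_mul, ← rpow_neg_sixth_sq hB,
    qPot_eq_sq hB m ξ₀, ← deriv_slice_fst hφ] at hK ⊢
  calc
    _ ≤ deGennes (ξ₀ + B ^ (-(1 : ℝ) / 6) * (delta1 B m ξ₀ + ρ ^ 2 / 2)) *
        ∫ τ in Ioi (0 : ℝ), ‖φ (τ, ρ)‖ ^ 2 := by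
      rw [mul_assoc (_ ^ 2)]
      exact mul_le_mul_of_nonneg_right (Theta0_add_well_le_deGennes hc hgap hK _) (by positivity)
    _ ≤ _ := deGennes_mul_integral_le hslice
      (integrable_norm_sq_of_hasCompactSupport hslice.continuous hslice_supp)
      ((integrable_norm_sq_of_hasCompactSupport (hslice.continuous_deriv le_rfl)
        hslice_supp.deriv).add (integrable_mul_norm_sq_of_hasCompactSupport (by fun_prop)
          hslice.continuous hslice_supp))

lemma mul_setIntegral_sq_le_of_well {F : Type*} [NormedAddCommGroup F] [NormedSpace ℝ F]
    {μ R : ℝ} {V : ℝ → ℝ} (hV : Continuous V)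
    (hwell : ∀ u : ℝ → F, ContDiff ℝ 1 u → HasCompactSupport u →
      μ * ∫ ρ in {ρ | R ≤ |ρ|}, ‖u ρ‖ ^ 2 ≤ ∫ ρ, (‖deriv u ρ‖ ^ 2 + V ρ * ‖u ρ‖ ^ 2))
    {φ : ℝ × ℝ → F} (hφ : ContDiff ℝ 1 φ) (hs : HasCompactSupport φ) :
    μ * ∫ p in halfPlane ∩ {p | R ≤ |p.2|}, ‖φ p‖ ^ 2 ≤
      (∫ p in halfPlane, ‖fderiv ℝ φ p (0, 1)‖ ^ 2) +
        ∫ p in halfPlane, V p.2 * ‖φ p‖ ^ 2 := by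
  have hfar : MeasurableSet {p : ℝ × ℝ | R ≤ |p.2|} :=
    measurableSet_le (by fun_prop) (by fun_prop)
  have hmass : IntegrableOn (fun p => ‖φ p‖ ^ 2) halfPlane :=
    integrable_norm_sq_of_hasCompactSupport hφ.continuous hs
  have hkinetic : IntegrableOn (fun p => ‖fderiv ℝ φ p (0, 1)‖ ^ 2) halfPlane :=
    integrable_norm_sq_of_hasCompactSupport (continuous_fderiv_apply_const hφ _)
      (hs.fderiv_apply ℝ _)
  have hpotential : IntegrableOn (fun p => V p.2 * ‖φ p‖ ^ 2) halfPlane :=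
    integrable_mul_norm_sq_of_hasCompactSupport (by fun_prop) hφ.continuous hs
  rw [← setIntegral_indicator hfar, ← integral_const_mul, ← integral_add hkinetic hpotential]
  refine setIntegral_halfPlane_mono ((hmass.indicator hfar).const_mul μ)
    (hkinetic.add hpotential) fun τ => ?_
  simp only [integral_const_mul, ← deriv_slice_snd hφ]
  refine le_of_eq_of_le ?_ (hwell (fun ρ => φ (τ, ρ)) (by fun_prop)
    (hasCompactSupport_slice_snd hs τ))
  rw [← integral_indicator (measurableSet_le (by fun_prop) (by fun_prop))]
  rfl

lemma eventually_rpow_mul_le_one {s : ℝ} (hs : s < 0) (K : ℝ) :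
    ∀ᶠ B : ℝ in atTop, B ^ s * K ≤ 1 := by
  have hlim : Tendsto (fun B : ℝ => B ^ s * K) atTop (𝓝 (0 * K)) := by
    simpa using (tendsto_rpow_neg_atTop (neg_pos.2 hs)).mul_const K
  rw [zero_mul] at hlim
  exact hlim.eventually_le_const one_pos

/-- Outside the strip `|ρ| < R` the form `q_m` exceeds `Θ₀` by at least `μ B^(-1/3)`, uniformly in
the angular momentum `m`. This is tested on compactly supported functions only, as eigenfunctions
will be truncated. -/
def HasFarGap (B R μ : ℝ) : Prop :=
  ∀ (m : ℤ) (φ : ℝ × ℝ → ℂ), ContDiff ℝ 1 φ → HasCompactSupport φ →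
    Theta0 * (∫ p in halfPlane, ‖φ p‖ ^ 2) +
        B ^ (-(1 : ℝ) / 3) * (μ * ∫ p in halfPlane ∩ {p | R ≤ |p.2|}, ‖φ p‖ ^ 2) ≤
      qForm B m φ

theorem exists_eventually_hasFarGap {μ : ℝ} (hμ : 0 ≤ μ) :
    ∃ R : ℝ, ∀ᶠ B : ℝ in atTop, HasFarGap B R μ := by
  obtain ⟨ξ₀, c, hc, hgap⟩ := exists_Theta0_add_le_deGennes
  obtain ⟨K, R, hwell⟩ := exists_mul_setIntegral_sq_le_well (F := ℂ) hc hμ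
  refine ⟨R, ?_⟩
  filter_upwards [eventually_rpow_mul_le_one (by norm_num : -(1 : ℝ) / 3 < 0) K,
    eventually_gt_atTop 0] with B hK hB m φ hφ hs
  have htransversal := Theta0_mul_add_well_le hc.le hgap hB hK m hφ hs
  have htangential :=
    mul_setIntegral_sq_le_of_well (by fun_prop) (hwell (delta1 B m ξ₀)) hφ hs
  have hk : 0 < B ^ (-(1 : ℝ) / 3) := by positivity
  rw [qForm_eq_add_mul hφ hs]
  linarith [mul_le_mul_of_nonneg_left htangential hk.le]

end Coercivity

section Localization

lemma fderiv_sq_mul_inner_fderiv {X F : Type*} [NormedAddCommGroup X] [NormedSpace ℝ X]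
    [NormedAddCommGroup F] [InnerProductSpace ℝ F] {g : X → ℝ} {ψ : X → F}
    (hg : Differentiable ℝ g) (hψ : ContDiff ℝ 2 ψ) (w p : X) :
    fderiv ℝ (fun q => g q ^ 2 * inner ℝ (ψ q) (fderiv ℝ ψ q w)) p w =
      ‖fderiv ℝ (fun q => g q • ψ q) p w‖ ^ 2 - fderiv ℝ g p w ^ 2 * ‖ψ p‖ ^ 2 +
        g p ^ 2 * inner ℝ (ψ p) (fderiv ℝ (fun q => fderiv ℝ ψ q w) p w) := by
  have hψ' := hψ.differentiable two_ne_zero p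
  have hψw : DifferentiableAt ℝ (fun q => fderiv ℝ ψ q w) p :=
    ((hψ.fderiv_right (m := 1) (by norm_num)).clm_apply contDiff_const).differentiable
      one_ne_zero p
  rw [fderiv_fun_mul (c := fun q => g q ^ 2) ((hg p).pow 2) (hψ'.inner ℝ hψw),
    fderiv_fun_smul (hg p) hψ']
  simp only [fderiv_fun_pow 2 (hg p), _root_.add_apply, _root_.smul_apply,
    ContinuousLinearMap.smulRight_apply, fderiv_inner_apply ℝ hψ' hψw, norm_add_sq_real,
    norm_smul, inner_smul_right, real_inner_self_eq_norm_sq, mul_pow, Real.norm_eq_abs, sq_abs,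
    real_inner_comm (ψ p), smul_eq_mul, Nat.add_one_sub_one, pow_one, nsmul_eq_mul,
    Nat.cast_ofNat, add_sub_cancel_right]
  ring

lemma contDiff_sq_mul_inner_fderiv {X F : Type*} [NormedAddCommGroup X] [NormedSpace ℝ X]
    [NormedAddCommGroup F] [InnerProductSpace ℝ F] {g : X → ℝ} {ψ : X → F}
    (hg : ContDiff ℝ 1 g) (hψ : ContDiff ℝ 2 ψ) (w : X) :
    ContDiff ℝ 1 fun q => g q ^ 2 * inner ℝ (ψ q) (fderiv ℝ ψ q w) :=
  (hg.pow 2).mul ((hψ.of_le one_le_two).inner ℝ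
    ((hψ.fderiv_right (m := 1) (by norm_num)).clm_apply contDiff_const))

lemma setIntegral_halfPlane_divergence_eq_zero {F G : ℝ × ℝ → ℝ} (hF : ContDiff ℝ 1 F)
    (hFs : HasCompactSupport F) (hG : ContDiff ℝ 1 G) (hGs : HasCompactSupport G)
    (h0 : ∀ ρ, F (0, ρ) = 0) (k : ℝ) :
    IntegrableOn (fun p => fderiv ℝ F p (1, 0) + k * fderiv ℝ G p (0, 1)) halfPlane ∧
      ∫ p in halfPlane, (fderiv ℝ F p (1, 0) + k * fderiv ℝ G p (0, 1)) = 0 := by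
  have hF_int := integrableOn_of_hasCompactSupport (s := halfPlane)
    (continuous_fderiv_apply_const hF (1, 0)) (hFs.fderiv_apply ℝ (1, 0))
  have hG_int := (integrableOn_of_hasCompactSupport (s := halfPlane)
    (continuous_fderiv_apply_const hG (0, 1)) (hGs.fderiv_apply ℝ (0, 1))).const_mul k
  refine ⟨hF_int.add hG_int, ?_⟩
  rw [integral_add hF_int hG_int, integral_const_mul,
    setIntegral_halfPlane_fderiv_fst_eq_zero hF hFs h0,
    setIntegral_halfPlane_fderiv_snd_eq_zero hG hGs, mul_zero, add_zero]

lemma integrableOn_fderiv_sq_mul_norm_sq {g : ℝ × ℝ → ℝ} {ψ : ℝ × ℝ → ℂ}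
    (hg : ContDiff ℝ 1 g) (hs : HasCompactSupport g) (hψ : Continuous ψ) (k : ℝ) :
    IntegrableOn (fun p => (fderiv ℝ g p (1, 0) ^ 2 + k * fderiv ℝ g p (0, 1) ^ 2) * ‖ψ p‖ ^ 2)
      halfPlane := by
  have := continuous_fderiv_apply_const hg
  have hsq (w : ℝ × ℝ) : HasCompactSupport fun p => fderiv ℝ g p w ^ 2 :=
    (hs.fderiv_apply ℝ w).comp_left (g := (· ^ 2)) (by simp)
  exact integrableOn_of_hasCompactSupport (by fun_prop) ((hsq _).add (hsq _).mul_left).mul_right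

namespace IsQEigenfunction

variable {B lam : ℝ} {m : ℤ} {ψ : ℝ × ℝ → ℂ} {g : ℝ × ℝ → ℝ}

lemma contDiff_two (h : IsQEigenfunction B m lam ψ) :
    ContDiff ℝ 2 ψ := mod_cast contDiff_infty.1 h.1 2

lemma contDiff_one (h : IsQEigenfunction B m lam ψ) :
    ContDiff ℝ 1 ψ := mod_cast contDiff_infty.1 h.1 1

lemma inner_d2τ_add (h : IsQEigenfunction B m lam ψ) {p : ℝ × ℝ} (hp : p ∈ halfPlane) :
    inner ℝ (ψ p) (d2τ ψ p) + B ^ (-(1 : ℝ) / 3) * inner ℝ (ψ p) (d2ρ ψ p) =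
      (qPot B m p - lam) * ‖ψ p‖ ^ 2 := by
  obtain ⟨-, -, -, -, -, heq, -⟩ := h
  have hd2τ : d2τ ψ p = (qPot B m p - lam) • ψ p - B ^ (-(1 : ℝ) / 3) • d2ρ ψ p := by
    simp only [Complex.real_smul]
    push_cast
    linear_combination -heq p hp
  rw [hd2τ, inner_sub_right, real_inner_smul_right, real_inner_smul_right,
    real_inner_self_eq_norm_sq]
  ring

/- The integrands differ by the divergence of the flux `g² ⟪ψ, (∂τ ψ, B^(-1/3) ∂ρ ψ)⟫`, whose
boundary integral vanishes by the Neumann condition. -/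
theorem qForm_smul (h : IsQEigenfunction B m lam ψ) (hg : ContDiff ℝ 1 g)
    (hs : HasCompactSupport g) : qForm B m (fun p => g p • ψ p) =
      lam * (∫ p in halfPlane, ‖g p • ψ p‖ ^ 2) +
        ∫ p in halfPlane, (fderiv ℝ g p (1, 0) ^ 2 +
          B ^ (-(1 : ℝ) / 3) * fderiv ℝ g p (0, 1) ^ 2) * ‖ψ p‖ ^ 2 := by
  have hψ := h.contDiff_two
  set k := B ^ (-(1 : ℝ) / 3)
  let flux (w p : ℝ × ℝ) : ℝ := g p ^ 2 * inner ℝ (ψ p) (fderiv ℝ ψ p w)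
  have hflux (w : ℝ × ℝ) : ContDiff ℝ 1 (flux w) := contDiff_sq_mul_inner_fderiv hg hψ w
  have hflux_supp (w : ℝ × ℝ) : HasCompactSupport (flux w) :=
    (hs.comp_left (g := (· ^ 2)) (by simp)).mul_right
  obtain ⟨hdiv, hdiv_zero⟩ := setIntegral_halfPlane_divergence_eq_zero (hflux (1, 0))
    (hflux_supp _) (hflux (0, 1)) (hflux_supp _) (fun ρ => by simp [flux, h.2.2.2.2.2.2 ρ]) k
  have hmass : IntegrableOn (fun p => lam * ‖g p • ψ p‖ ^ 2) halfPlane :=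
    (integrable_norm_sq_of_hasCompactSupport (hg.continuous.smul hψ.continuous)
      hs.smul_right).const_mul lam
  have hgrad := integrableOn_fderiv_sq_mul_norm_sq hg hs hψ.continuous k
  rw [qForm, ← integral_const_mul, ← integral_add hmass hgrad]
  refine Eq.trans ?_ ((integral_add (hmass.add hgrad) hdiv).trans (by
    rw [hdiv_zero, add_zero]; rfl))
  refine setIntegral_congr_fun measurableSet_halfPlane fun p hp => ?_
  have := h.inner_d2τ_add hp
  simp only [d2τ, d2ρ] at this
  simp only [flux, qIntegrand, norm_smul, mul_pow, Real.norm_eq_abs, sq_abs, Pi.add_apply,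
    fderiv_sq_mul_inner_fderiv (hg.differentiable one_ne_zero) hψ]
  linear_combination (-g p ^ 2) * this

end IsQEigenfunction

end Localization

section Cutoff

lemma exists_contDiff_cutoff : ∃ (χ : ℝ → ℝ) (K : ℝ), ContDiff ℝ 1 χ ∧ HasCompactSupport χ ∧
    (∀ x, |x| ≤ 1 → χ x = 1) ∧ (∀ x, |χ x| ≤ 1) ∧
    ∀ x, (1 + |x|) * |χ x| ≤ K ∧ (1 + |x|) * |deriv χ x| ≤ K := by
  let χ : ContDiffBump (0 : ℝ) := ⟨1, 2, one_pos, one_lt_two⟩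
  have hχ : ContDiff ℝ 1 χ := χ.contDiff
  have hbound {f : ℝ → ℝ} (hf : Continuous f) (hs : HasCompactSupport f) :
      ∃ K, ∀ x, (1 + |x|) * |f x| ≤ K := by
    obtain ⟨K, hK⟩ := (show Continuous fun x => (1 + |x|) * |f x| by
      fun_prop).bounded_above_of_compact_support (hs.abs.mul_left)
    exact ⟨K, fun x => (le_abs_self _).trans (hK x)⟩
  obtain ⟨K₀, hK₀⟩ := hbound hχ.continuous χ.hasCompactSupport
  obtain ⟨K₁, hK₁⟩ := hbound (hχ.continuous_deriv le_rfl) χ.hasCompactSupport.deriv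
  refine ⟨χ, max K₀ K₁, hχ, χ.hasCompactSupport, fun x hx => χ.one_of_mem_closedBall ?_,
    fun x => by simpa [abs_of_nonneg χ.nonneg] using χ.le_one,
    fun x => ⟨(hK₀ x).trans (le_max_left _ _), (hK₁ x).trans (le_max_right _ _)⟩⟩
  simpa [χ] using hx

lemma inv_mul_abs_pow_le {N : ℝ} (hN : 1 ≤ N) (n : ℕ) (x : ℝ) :
    N⁻¹ * |x ^ n| ≤ (1 + |N⁻¹ * x|) * |x ^ (n - 1)| := by
  have hN_inv : N⁻¹ ≤ 1 := inv_le_one_of_one_le₀ hN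
  rw [abs_mul, abs_of_nonneg (by positivity : 0 ≤ N⁻¹)]
  cases n with
  | zero => simpa using hN_inv.trans (le_add_of_nonneg_right (by positivity))
  | succ n =>
    rw [pow_succ', abs_mul, add_tsub_cancel_right, ← mul_assoc]
    gcongr
    linarith

lemma abs_mul_inv_mul_abs_pow_le {y K N : ℝ} (hN : 1 ≤ N) (n : ℕ) {x : ℝ}
    (hy : (1 + |N⁻¹ * x|) * |y| ≤ K) : |y| * (N⁻¹ * |x ^ n|) ≤ K * |x ^ (n - 1)| :=
  calc |y| * (N⁻¹ * |x ^ n|) ≤ |y| * ((1 + |N⁻¹ * x|) * |x ^ (n - 1)|) :=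
        mul_le_mul_of_nonneg_left (inv_mul_abs_pow_le hN n x) (abs_nonneg y)
    _ = (1 + |N⁻¹ * x|) * |y| * |x ^ (n - 1)| := by ring
    _ ≤ K * |x ^ (n - 1)| := by gcongr

lemma abs_deriv_cutoff_mul_pow_le {χ : ℝ → ℝ} {K N : ℝ} (hχ : Differentiable ℝ χ) (hN : 1 ≤ N)
    (n : ℕ) {x : ℝ} (hle : |χ (N⁻¹ * x)| ≤ 1) (hK : (1 + |N⁻¹ * x|) * |deriv χ (N⁻¹ * x)| ≤ K) :
    |deriv (fun x => χ (N⁻¹ * x) * x ^ n) x| ≤ (K + n) * |x ^ (n - 1)| := by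
  have hderiv : HasDerivAt (fun x => χ (N⁻¹ * x) * x ^ n)
      (deriv χ (N⁻¹ * x) * (N⁻¹ * 1) * x ^ n + χ (N⁻¹ * x) * (n * x ^ (n - 1))) x :=
    ((hχ _).hasDerivAt.comp x ((hasDerivAt_id x).const_mul N⁻¹)).mul (hasDerivAt_pow n x)
  rw [hderiv.deriv, add_mul]
  refine (abs_add_le _ _).trans (add_le_add ?_ ?_)
  · refine le_trans (le_of_eq ?_) (abs_mul_inv_mul_abs_pow_le hN n hK)
    rw [abs_mul, abs_mul, mul_one, abs_of_pos (by positivity : 0 < N⁻¹), mul_assoc]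
  · rw [abs_mul, abs_mul, Nat.abs_cast]
    exact mul_le_of_le_one_left (by positivity) hle

lemma exists_pow_cutoff (n : ℕ) : ∃ L : ℝ, ∀ N : ℝ, 1 ≤ N → ∃ u : ℝ → ℝ,
    ContDiff ℝ 1 u ∧ HasCompactSupport u ∧ (∀ x, |x| ≤ N → u x = x ^ n) ∧
    ∀ x, |u x| ≤ |x ^ n| ∧ |u x| ≤ N * (L * |x ^ (n - 1)|) ∧ |deriv u x| ≤ L * |x ^ (n - 1)| := by
  obtain ⟨χ, K, hχ, hχs, hχ_one, hχ_le, hχK⟩ := exists_contDiff_cutoff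
  refine ⟨K + n, fun N hN => ⟨fun x => χ (N⁻¹ * x) * x ^ n, by fun_prop, ?_, fun x hx => ?_,
    fun x => ⟨?_, ?_, abs_deriv_cutoff_mul_pow_le (hχ.differentiable one_ne_zero) hN n
      (hχ_le _) (hχK _).2⟩⟩⟩
  all_goals have hN0 : 0 < N := by linarith
  · exact (hχs.comp_homeomorph (Homeomorph.mulLeft₀ N⁻¹ (inv_pos.2 hN0).ne')).mul_right
  · have : |N⁻¹ * x| ≤ 1 := by rwa [abs_mul, abs_of_pos (inv_pos.2 hN0), inv_mul_le_one₀ hN0]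
    simp only [hχ_one _ this, one_mul]
  · rw [abs_mul]
    exact mul_le_of_le_one_left (abs_nonneg _) (hχ_le _)
  · calc |χ (N⁻¹ * x) * x ^ n| = N * (|χ (N⁻¹ * x)| * (N⁻¹ * |x ^ n|)) := by
          rw [abs_mul]
          field_simp
      _ ≤ N * (K * |x ^ (n - 1)|) := by
          grw [abs_mul_inv_mul_abs_pow_le hN n (hχK _).1]
      _ ≤ N * ((K + n) * |x ^ (n - 1)|) := by
          grw [← le_add_of_nonneg_right (a := K) n.cast_nonneg]

lemma hasCompactSupport_comp_fst_mul_comp_snd {f g : ℝ → ℝ} (hf : HasCompactSupport f)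
    (hg : HasCompactSupport g) : HasCompactSupport fun p : ℝ × ℝ => f p.1 * g p.2 := by
  refine HasCompactSupport.intro (hf.prod hg) fun p hp => ?_
  rcases not_and_or.1 hp with hp | hp
  · rw [image_eq_zero_of_notMem_tsupport hp, zero_mul]
  · rw [image_eq_zero_of_notMem_tsupport hp, mul_zero]

lemma fderiv_comp_fst_mul_comp_snd {f g : ℝ → ℝ} (hf : Differentiable ℝ f)
    (hg : Differentiable ℝ g) (p w : ℝ × ℝ) : fderiv ℝ (fun q : ℝ × ℝ => f q.1 * g q.2) p w =
      w.1 * deriv f p.1 * g p.2 + w.2 * deriv g p.2 * f p.1 := by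
  have hfp := (hf p.1).hasDerivAt.hasFDerivAt.comp p (hasFDerivAt_fst (𝕜 := ℝ))
  have hgp := (hg p.2).hasDerivAt.hasFDerivAt.comp p (hasFDerivAt_snd (𝕜 := ℝ))
  have : HasFDerivAt (fun q : ℝ × ℝ => f q.1 * g q.2) _ p := hfp.mul hgp
  rw [this.fderiv]
  simp only [Function.comp_apply, _root_.add_apply, _root_.smul_apply,
    ContinuousLinearMap.comp_apply, ContinuousLinearMap.coe_snd', ContinuousLinearMap.coe_fst',
    ContinuousLinearMap.toSpanSingleton_apply, smul_eq_mul]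
  ring

lemma fderiv_scaled_cutoff_sq_add_le {χ u : ℝ → ℝ} {k N L₀ L v : ℝ} (hχ : Differentiable ℝ χ)
    (hu : Differentiable ℝ u) (hk : 0 ≤ k) (hN : 0 < N) {p : ℝ × ℝ} (hχ_le : ∀ x, |χ x| ≤ 1)
    (hχ' : ∀ x, |deriv χ x| ≤ L₀) (hu_le : |u p.2| ≤ N * (L * v))
    (hu' : |deriv u p.2| ≤ L * v) :
    fderiv ℝ (fun q : ℝ × ℝ => χ (√k / N * q.1) * u q.2) p (1, 0) ^ 2 +
      k * fderiv ℝ (fun q : ℝ × ℝ => χ (√k / N * q.1) * u q.2) p (0, 1) ^ 2 ≤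
        k * (((L₀ * L) ^ 2 + L ^ 2) * v ^ 2) := by
  have hχ_scaled : Differentiable ℝ fun τ => χ (√k / N * τ) := by fun_prop
  have hτ : |√k / N * deriv χ (√k / N * p.1) * u p.2| ≤ √k * (L₀ * L * v) := by
    rw [abs_mul, abs_mul, abs_of_nonneg (by positivity : 0 ≤ √k / N)]
    calc √k / N * |deriv χ (√k / N * p.1)| * |u p.2| ≤ √k / N * L₀ * (N * (L * v)) := by
          gcongr
          exacts [mul_nonneg (by positivity) ((abs_nonneg _).trans (hχ' 0)), hχ' _]
      _ = √k * (L₀ * L * v) := by field_simp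
  have hρ : |deriv u p.2 * χ (√k / N * p.1)| ≤ L * v := by
    rw [abs_mul]
    exact (mul_le_of_le_one_right (abs_nonneg _) (hχ_le _)).trans hu'
  simp only [fderiv_comp_fst_mul_comp_snd hχ_scaled hu, deriv_comp_mul_left, smul_eq_mul, one_mul,
    zero_mul, add_zero, zero_add]
  calc _ ≤ (√k * (L₀ * L * v)) ^ 2 + k * (L * v) ^ 2 :=
        add_le_add (sq_le_sq' (abs_le.1 hτ).1 (abs_le.1 hτ).2)
          (mul_le_mul_of_nonneg_left (sq_le_sq' (abs_le.1 hρ).1 (abs_le.1 hρ).2) hk)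
    _ = k * (((L₀ * L) ^ 2 + L ^ 2) * v ^ 2) := by
        rw [mul_pow √k, Real.sq_sqrt hk]
        ring

/-- `g` is a compactly supported truncation of the weight `ρ ^ n`, exact on the ball of radius `N`,
whose gradient, measured with the anisotropic coefficients `(1, k)` of the operator, is as small
as that of a function of `ρ` alone. -/
structure IsPowCutoff (n : ℕ) (K k N : ℝ) (g : ℝ × ℝ → ℝ) : Prop where
  contDiff : ContDiff ℝ 1 g
  hasCompactSupport : HasCompactSupport g
  eq_pow : ∀ p ∈ Metric.closedBall 0 N, g p = p.2 ^ n
  sq_le : ∀ p, g p ^ 2 ≤ (p.2 ^ n) ^ 2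
  fderiv_sq_le : ∀ p, fderiv ℝ g p (1, 0) ^ 2 + k * fderiv ℝ g p (0, 1) ^ 2 ≤
    k * (K * (p.2 ^ (n - 1)) ^ 2)

/- The `τ`-cutoff lives at scale `N / √k`, so that its derivative is also of size `√k`. -/
lemma exists_isPowCutoff (n : ℕ) : ∃ K : ℝ, 0 ≤ K ∧ ∀ k ∈ Ioc (0 : ℝ) 1, ∀ N : ℝ, 1 ≤ N →
    ∃ g, IsPowCutoff n K k N g := by
  obtain ⟨L₀, hL₀⟩ := exists_pow_cutoff 0
  obtain ⟨L, hL⟩ := exists_pow_cutoff n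
  obtain ⟨χ, hχ, hχs, hχ_one, hχ_le⟩ := hL₀ 1 le_rfl
  simp only [pow_zero, zero_tsub, abs_one, mul_one] at hχ_one hχ_le
  refine ⟨(L₀ * L) ^ 2 + L ^ 2, by positivity, fun k hk N hN => ?_⟩
  obtain ⟨u, hu, hus, hu_eq, hu_le⟩ := hL N hN
  have hN0 : 0 < N := by linarith
  have ha : 0 < √k / N := div_pos (Real.sqrt_pos.2 hk.1) hN0
  refine ⟨fun p => χ (√k / N * p.1) * u p.2, by fun_prop, hasCompactSupport_comp_fst_mul_comp_snd
    (hχs.comp_homeomorph (Homeomorph.mulLeft₀ _ ha.ne')) hus, fun p hp => ?_, fun p => ?_,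
    fun p => ?_⟩
  · have hp : |p.1| ≤ N ∧ |p.2| ≤ N := by simpa [Prod.norm_def] using hp
    have : |√k / N * p.1| ≤ 1 := by
      rw [abs_mul, abs_of_pos ha, div_mul_eq_mul_div, div_le_one hN0]
      exact (mul_le_of_le_one_left (abs_nonneg _) (Real.sqrt_le_one.2 hk.2)).trans hp.1
    simp only [hχ_one _ this, hu_eq _ hp.2, one_mul]
  · rw [sq_le_sq, abs_mul]
    exact (mul_le_of_le_one_left (abs_nonneg _) (hχ_le _).1).trans (hu_le _).1
  · rw [← sq_abs (p.2 ^ _)]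
    exact fderiv_scaled_cutoff_sq_add_le (hχ.differentiable one_ne_zero)
      (hu.differentiable one_ne_zero) hk.1.le hN0 (fun x => (hχ_le x).1) (fun x => (hχ_le x).2.2)
      (hu_le _).2.1 (hu_le _).2.2

end Cutoff

section Moments

lemma integrable_and_integral_le_of_eqOn_closedBall {X : Type*} [PseudoMetricSpace X]
    [MeasurableSpace X] [OpensMeasurableSpace X] {ν : Measure X} {f : X → ℝ} {c : X} {I : ℝ}
    (hf : ∀ x, 0 ≤ f x) (h : ∀ N : ℝ, 1 ≤ N → ∃ F : X → ℝ, (∀ x, 0 ≤ F x) ∧ Integrable F ν ∧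
      EqOn F f (Metric.closedBall c N) ∧ ∫ x, F x ∂ν ≤ I) :
    Integrable f ν ∧ ∫ x, f x ∂ν ≤ I := by
  have hball (N : ℝ) (hN : 1 ≤ N) : IntegrableOn f (Metric.closedBall c N) ν ∧
      ∫ x in Metric.closedBall c N, f x ∂ν ≤ I := by
    obtain ⟨F, hF, hF_int, hFf, hFI⟩ := h N hN
    have hmeas := (Metric.isClosed_closedBall (x := c) (ε := N)).measurableSet
    refine ⟨hF_int.integrableOn.congr_fun hFf hmeas, ?_⟩
    rw [← setIntegral_congr_fun hmeas hFf]
    exact (setIntegral_le_integral hF_int (.of_forall hF)).trans hFI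
  have hcover : AECover ν atTop fun N : ℝ => Metric.closedBall c (max 1 N) :=
    aecover_closedBall (tendsto_atTop_mono (le_max_right 1) tendsto_id)
  have hf_int := hcover.integrable_of_integral_bounded_of_nonneg_ae I
    (fun N => (hball _ (le_max_left 1 N)).1) (.of_forall hf)
    (.of_forall fun N => (hball _ (le_max_left 1 N)).2)
  exact ⟨hf_int, le_of_tendsto' (hcover.integral_tendsto_of_countably_generated hf_int)
    fun N => (hball _ (le_max_left 1 N)).2⟩

/-- The moment `∫ ρ^(2n) |ψ|²` over the half plane; as a Bochner integral it is zero when the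
moment is infinite, so bounds on it are stated together with integrability. -/
def rhoMoment (n : ℕ) (ψ : ℝ × ℝ → ℂ) : ℝ :=
  ∫ p in halfPlane, (p.2 ^ n) ^ 2 * ‖ψ p‖ ^ 2

lemma rhoMoment_zero (ψ : ℝ × ℝ → ℂ) : rhoMoment 0 ψ = ∫ p in halfPlane, ‖ψ p‖ ^ 2 := by
  simp only [rhoMoment, pow_zero, one_pow, one_mul]

lemma norm_real_smul_sq (a : ℝ) (z : ℂ) : ‖a • z‖ ^ 2 = a ^ 2 * ‖z‖ ^ 2 := by
  rw [norm_smul, mul_pow, Real.norm_eq_abs, sq_abs]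

lemma sq_mul_norm_fderiv_sq_le {g : ℝ × ℝ → ℝ} {ψ : ℝ × ℝ → ℂ} (hg : ContDiff ℝ 1 g)
    (hψ : ContDiff ℝ 1 ψ) (w p : ℝ × ℝ) : g p ^ 2 * ‖fderiv ℝ ψ p w‖ ^ 2 ≤
      2 * ‖fderiv ℝ (fun q => g q • ψ q) p w‖ ^ 2 + 2 * (fderiv ℝ g p w ^ 2 * ‖ψ p‖ ^ 2) := by
  have hprod : g p • fderiv ℝ ψ p w =
      fderiv ℝ (fun q => g q • ψ q) p w - fderiv ℝ g p w • ψ p := by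
    rw [fderiv_fun_smul (hg.differentiable one_ne_zero p) (hψ.differentiable one_ne_zero p)]
    simp
  rw [← norm_real_smul_sq, ← norm_real_smul_sq, hprod]
  nlinarith [norm_sub_le (fderiv ℝ (fun q => g q • ψ q) p w) (fderiv ℝ g p w • ψ p),
    norm_nonneg (fderiv ℝ (fun q => g q • ψ q) p w - fderiv ℝ g p w • ψ p),
    sq_nonneg (‖fderiv ℝ (fun q => g q • ψ q) p w‖ - ‖fderiv ℝ g p w • ψ p‖)]

namespace IsPowCutoff

variable {n : ℕ} {K k N : ℝ} {g : ℝ × ℝ → ℝ} {ψ : ℝ × ℝ → ℂ}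

lemma integrableOn_norm_smul_sq (hg : IsPowCutoff n K k N g) (hψ : Continuous ψ) :
    IntegrableOn (fun p => ‖g p • ψ p‖ ^ 2) halfPlane :=
  integrable_norm_sq_of_hasCompactSupport (hg.contDiff.continuous.smul hψ)
    hg.hasCompactSupport.smul_right

lemma setIntegral_norm_smul_sq_le (hg : IsPowCutoff n K k N g) (hψ : Continuous ψ)
    (hint : IntegrableOn (fun p => (p.2 ^ n) ^ 2 * ‖ψ p‖ ^ 2) halfPlane) :
    ∫ p in halfPlane, ‖g p • ψ p‖ ^ 2 ≤ rhoMoment n ψ := by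
  refine setIntegral_mono (hg.integrableOn_norm_smul_sq hψ) hint fun p => ?_
  simp only [norm_real_smul_sq]
  exact mul_le_mul_of_nonneg_right (hg.sq_le p) (sq_nonneg _)

lemma setIntegral_fderiv_sq_mul_le (hg : IsPowCutoff n K k N g) (hψ : Continuous ψ)
    (hint : IntegrableOn (fun p => (p.2 ^ (n - 1)) ^ 2 * ‖ψ p‖ ^ 2) halfPlane) :
    ∫ p in halfPlane, (fderiv ℝ g p (1, 0) ^ 2 + k * fderiv ℝ g p (0, 1) ^ 2) * ‖ψ p‖ ^ 2 ≤
      k * (K * rhoMoment (n - 1) ψ) := by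
  rw [rhoMoment, ← integral_const_mul, ← integral_const_mul]
  refine setIntegral_mono (integrableOn_fderiv_sq_mul_norm_sq hg.contDiff hg.hasCompactSupport
    hψ k) ((hint.const_mul K).const_mul k) fun p => ?_
  calc _ ≤ k * (K * (p.2 ^ (n - 1)) ^ 2) * ‖ψ p‖ ^ 2 :=
        mul_le_mul_of_nonneg_right (hg.fderiv_sq_le p) (sq_nonneg _)
    _ = _ := by ring

lemma setIntegral_norm_smul_sq_le_near_add_far (hg : IsPowCutoff n K k N g) (hψ : Continuous ψ)
    (hint : IntegrableOn (fun p => ‖ψ p‖ ^ 2) halfPlane) (R : ℝ) :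
    ∫ p in halfPlane, ‖g p • ψ p‖ ^ 2 ≤ (R ^ n) ^ 2 * (∫ p in halfPlane, ‖ψ p‖ ^ 2) +
      ∫ p in halfPlane ∩ {p | R ≤ |p.2|}, ‖g p • ψ p‖ ^ 2 := by
  have hfar : MeasurableSet {p : ℝ × ℝ | R ≤ |p.2|} :=
    measurableSet_le (by fun_prop) (by fun_prop)
  have hmass := hg.integrableOn_norm_smul_sq hψ
  rw [← setIntegral_indicator hfar, ← integral_const_mul,
    ← integral_add (hint.const_mul _) (hmass.indicator hfar)]
  refine setIntegral_mono hmass ((hint.const_mul _).add (hmass.indicator hfar)) fun p => ?_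
  by_cases hp : R ≤ |p.2|
  · simp only [indicator_of_mem (s := {p : ℝ × ℝ | R ≤ |p.2|}) hp]
    exact le_add_of_nonneg_left (by positivity)
  · simp only [indicator_of_notMem (s := {p : ℝ × ℝ | R ≤ |p.2|}) hp, add_zero,
      norm_real_smul_sq]
    refine mul_le_mul_of_nonneg_right ((hg.sq_le p).trans ?_) (sq_nonneg _)
    rw [sq_le_sq, abs_pow, abs_pow]
    exact pow_le_pow_left₀ (abs_nonneg _) ((not_le.1 hp).le.trans (le_abs_self R)) n

end IsPowCutoff

/-- The energy density `|ψ|² + |∂τ ψ|² + B^(-1/3) |∂ρ ψ|²` whose moments are to be bounded. -/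
def energyDensity (B : ℝ) (ψ : ℝ × ℝ → ℂ) (p : ℝ × ℝ) : ℝ :=
  ‖ψ p‖ ^ 2 + ‖fderiv ℝ ψ p (1, 0)‖ ^ 2 + B ^ (-(1 : ℝ) / 3) * ‖fderiv ℝ ψ p (0, 1)‖ ^ 2

lemma energyDensity_nonneg {B : ℝ} (hB : 0 ≤ B) (ψ : ℝ × ℝ → ℂ) (p : ℝ × ℝ) :
    0 ≤ energyDensity B ψ p := by
  unfold energyDensity
  positivity

lemma continuous_energyDensity {ψ : ℝ × ℝ → ℂ} (hψ : ContDiff ℝ 1 ψ) (B : ℝ) :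
    Continuous (energyDensity B ψ) := by
  have := continuous_fderiv_apply_const hψ
  have := hψ.continuous
  unfold energyDensity
  fun_prop

lemma sq_mul_energyDensity_le {g : ℝ × ℝ → ℝ} {ψ : ℝ × ℝ → ℂ} (hg : ContDiff ℝ 1 g)
    (hψ : ContDiff ℝ 1 ψ) {B : ℝ} (hB : 0 ≤ B) (m : ℤ) (p : ℝ × ℝ) :
    g p ^ 2 * energyDensity B ψ p ≤
      ‖g p • ψ p‖ ^ 2 + 2 * qIntegrand B m (fun q => g q • ψ q) p +
        2 * ((fderiv ℝ g p (1, 0) ^ 2 + B ^ (-(1 : ℝ) / 3) * fderiv ℝ g p (0, 1) ^ 2) *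
          ‖ψ p‖ ^ 2) := by
  have hk : 0 ≤ B ^ (-(1 : ℝ) / 3) := rpow_nonneg hB _
  have hpot : 0 ≤ qPot B m p * ‖g p • ψ p‖ ^ 2 := mul_nonneg (sq_nonneg _) (sq_nonneg _)
  have hτ := sq_mul_norm_fderiv_sq_le hg hψ (1, 0) p
  have hρ := mul_le_mul_of_nonneg_left (sq_mul_norm_fderiv_sq_le hg hψ (0, 1) p) hk
  rw [energyDensity, qIntegrand]
  linarith [norm_real_smul_sq (g p) (ψ p)]

namespace IsQEigenfunction

variable {B lam ω R K N : ℝ} {m : ℤ} {n : ℕ} {ψ : ℝ × ℝ → ℂ} {g : ℝ × ℝ → ℝ}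

lemma setIntegral_norm_smul_sq_le (h : IsQEigenfunction B m lam ψ) (hB : 0 < B) (hω : 0 ≤ ω)
    (hlam : lam ≤ Theta0 + ω * B ^ (-(1 : ℝ) / 3)) (hgap : HasFarGap B R (ω + 1))
    (hg : IsPowCutoff n K (B ^ (-(1 : ℝ) / 3)) N g)
    (hint : IntegrableOn (fun p => (p.2 ^ (n - 1)) ^ 2 * ‖ψ p‖ ^ 2) halfPlane) :
    ∫ p in halfPlane, ‖g p • ψ p‖ ^ 2 ≤
      (ω + 1) * ((R ^ n) ^ 2 * rhoMoment 0 ψ) + K * rhoMoment (n - 1) ψ := by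
  have hk : 0 < B ^ (-(1 : ℝ) / 3) := rpow_pos_of_pos hB _
  have hψ := h.contDiff_one.continuous
  have hgap := hgap m (fun p => g p • ψ p) (hg.contDiff.smul h.contDiff_one)
    hg.hasCompactSupport.smul_right
  have herror := hg.setIntegral_fderiv_sq_mul_le hψ hint
  have hnear_far := hg.setIntegral_norm_smul_sq_le_near_add_far hψ h.2.1 R
  rw [← rhoMoment_zero ψ] at hnear_far
  rw [h.qForm_smul hg.contDiff hg.hasCompactSupport] at hgap
  set mass := ∫ p in halfPlane, ‖g p • ψ p‖ ^ 2
  set far := ∫ p in halfPlane ∩ {p | R ≤ |p.2|}, ‖g p • ψ p‖ ^ 2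
  have hmass : 0 ≤ mass := integral_nonneg fun p => by positivity
  have hfar : (ω + 1) * far ≤ ω * mass + K * rhoMoment (n - 1) ψ := by
    refine le_of_mul_le_mul_left ?_ hk
    linarith [mul_le_mul_of_nonneg_right hlam hmass]
  linarith [mul_le_mul_of_nonneg_left hnear_far (by linarith : 0 ≤ ω + 1)]

lemma setIntegral_sq_mul_energyDensity_le (h : IsQEigenfunction B m lam ψ) (hB : 0 ≤ B)
    (hg : IsPowCutoff n K (B ^ (-(1 : ℝ) / 3)) N g)
    (hint : IntegrableOn (fun p => (p.2 ^ (n - 1)) ^ 2 * ‖ψ p‖ ^ 2) halfPlane) :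
    IntegrableOn (fun p => g p ^ 2 * energyDensity B ψ p) halfPlane ∧
    ∫ p in halfPlane, g p ^ 2 * energyDensity B ψ p ≤
      (1 + 2 * lam) * (∫ p in halfPlane, ‖g p • ψ p‖ ^ 2) +
        4 * (B ^ (-(1 : ℝ) / 3) * (K * rhoMoment (n - 1) ψ)) := by
  have hψ := h.contDiff_one
  have hψ_cont := hψ.continuous
  have hg_cont := hg.contDiff.continuous
  have henergy_cont := continuous_energyDensity hψ B
  have hmass := hg.integrableOn_norm_smul_sq hψ_cont
  have hform : IntegrableOn (fun p => 2 * qIntegrand B m (fun q => g q • ψ q) p) halfPlane :=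
    (integrableOn_qIntegrand (hg.contDiff.smul hψ) hg.hasCompactSupport.smul_right B m).const_mul 2
  have herror := (integrableOn_fderiv_sq_mul_norm_sq hg.contDiff hg.hasCompactSupport hψ_cont
    (B ^ (-(1 : ℝ) / 3))).const_mul 2
  have henergy : IntegrableOn (fun p => g p ^ 2 * energyDensity B ψ p) halfPlane :=
    integrableOn_of_hasCompactSupport (by fun_prop)
      (hg.hasCompactSupport.comp_left (g := (· ^ 2)) (by simp)).mul_right
  have hmain : IntegrableOn (fun p => ‖g p • ψ p‖ ^ 2 +
      2 * qIntegrand B m (fun q => g q • ψ q) p) halfPlane := hmass.add hform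
  refine ⟨henergy, (setIntegral_mono henergy (hmain.add herror)
    (sq_mul_energyDensity_le hg.contDiff hψ hB m)).trans ?_⟩
  have herror_le := hg.setIntegral_fderiv_sq_mul_le hψ_cont hint
  have hqForm := h.qForm_smul hg.contDiff hg.hasCompactSupport
  rw [qForm] at hqForm
  simp only [Pi.add_apply]
  rw [integral_add hmain herror, integral_add hmass hform, integral_const_mul,
    integral_const_mul]
  linarith

end IsQEigenfunction

lemma rpow_neg_third_mem_Ioc {B : ℝ} (hB : 1 ≤ B) : B ^ (-(1 : ℝ) / 3) ∈ Ioc 0 1 :=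
  ⟨rpow_pos_of_pos (one_pos.trans_le hB) _,
    rpow_le_one_of_one_le_of_nonpos hB (by norm_num)⟩

variable {ω : ℝ}

/- For the truncation `g` of `ρ ^ (n + 1)` the localization error is controlled by the moment of
order `n`, and the far gap absorbs the mass of `g ψ` outside the strip `|ρ| < R`. -/
theorem exists_rhoMoment_le (hω : 0 ≤ ω) (R : ℝ) (n : ℕ) : ∃ C : ℝ, 0 ≤ C ∧
    ∀ (B : ℝ) (m : ℤ) (lam : ℝ) (ψ : ℝ × ℝ → ℂ), 1 ≤ B → HasFarGap B R (ω + 1) →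
      IsQEigenfunction B m lam ψ → lam ≤ Theta0 + ω * B ^ (-(1 : ℝ) / 3) →
        IntegrableOn (fun p => (p.2 ^ n) ^ 2 * ‖ψ p‖ ^ 2) halfPlane ∧
          rhoMoment n ψ ≤ C * rhoMoment 0 ψ := by
  induction n with
  | zero =>
    refine ⟨1, zero_le_one, fun B m lam ψ _ _ h _ => ⟨?_, (one_mul _).ge⟩⟩
    simpa only [pow_zero, one_pow, one_mul] using h.2.1
  | succ n ih =>
    obtain ⟨C, hC, hmoment⟩ := ih
    obtain ⟨K, hK, hcutoff⟩ := exists_isPowCutoff (n + 1)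
    refine ⟨(ω + 1) * (R ^ (n + 1)) ^ 2 + K * C, by positivity,
      fun B m lam ψ hB hgap h hlam => ?_⟩
    have hB0 : 0 < B := one_pos.trans_le hB
    obtain ⟨hint, hle⟩ := hmoment B m lam ψ hB hgap h hlam
    refine integrable_and_integral_le_of_eqOn_closedBall (c := 0) (fun p => by positivity)
      fun N hN => ?_
    obtain ⟨g, hg⟩ := hcutoff _ (rpow_neg_third_mem_Ioc hB) N hN
    have hmass := h.setIntegral_norm_smul_sq_le hB0 hω hlam hgap hg hint
    rw [Nat.add_sub_cancel] at hmass
    refine ⟨fun p => ‖g p • ψ p‖ ^ 2, fun p => sq_nonneg _,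
      hg.integrableOn_norm_smul_sq h.contDiff_one.continuous,
      fun p hp => by simp only [norm_real_smul_sq, hg.eq_pow p hp], hmass.trans ?_⟩
    linarith [mul_le_mul_of_nonneg_left hle hK]

theorem exists_setIntegral_pow_sq_mul_energyDensity_le (hω : 0 ≤ ω) (R : ℝ) (n : ℕ) :
    ∃ C : ℝ, 0 ≤ C ∧
    ∀ (B : ℝ) (m : ℤ) (lam : ℝ) (ψ : ℝ × ℝ → ℂ), 1 ≤ B → HasFarGap B R (ω + 1) →
      IsQEigenfunction B m lam ψ → lam ≤ Theta0 + ω * B ^ (-(1 : ℝ) / 3) →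
        IntegrableOn (fun p => (p.2 ^ n) ^ 2 * energyDensity B ψ p) halfPlane ∧
          ∫ p in halfPlane, (p.2 ^ n) ^ 2 * energyDensity B ψ p ≤ C * rhoMoment 0 ψ := by
  obtain ⟨C, hC, hmoment⟩ := exists_rhoMoment_le hω R n
  obtain ⟨C', hC', hmoment'⟩ := exists_rhoMoment_le hω R (n - 1)
  obtain ⟨K, hK, hcutoff⟩ := exists_isPowCutoff n
  refine ⟨(1 + 2 * (|Theta0| + ω)) * C + 4 * (K * C'), by positivity,
    fun B m lam ψ hB hgap h hlam => ?_⟩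
  have hB0 : 0 < B := one_pos.trans_le hB
  have hk := rpow_neg_third_mem_Ioc hB
  obtain ⟨hint, hle⟩ := hmoment B m lam ψ hB hgap h hlam
  obtain ⟨hint', hle'⟩ := hmoment' B m lam ψ hB hgap h hlam
  refine integrable_and_integral_le_of_eqOn_closedBall (c := 0)
    (fun p => mul_nonneg (sq_nonneg _) (energyDensity_nonneg hB0.le ψ p)) fun N hN => ?_
  obtain ⟨g, hg⟩ := hcutoff _ hk N hN
  obtain ⟨henergy, henergy_le⟩ := h.setIntegral_sq_mul_energyDensity_le hB0.le hg hint'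
  refine ⟨fun p => g p ^ 2 * energyDensity B ψ p,
    fun p => mul_nonneg (sq_nonneg _) (energyDensity_nonneg hB0.le ψ p), henergy,
    fun p hp => by simp only [hg.eq_pow p hp], henergy_le.trans ?_⟩
  have hlam_le : lam ≤ |Theta0| + ω :=
    hlam.trans (add_le_add (le_abs_self _) (mul_le_of_le_one_right hω hk.2))
  have hmass : ∫ p in halfPlane, ‖g p • ψ p‖ ^ 2 ≤ C * rhoMoment 0 ψ :=
    (hg.setIntegral_norm_smul_sq_le h.contDiff_one.continuous hint).trans hle
  have herror : B ^ (-(1 : ℝ) / 3) * (K * rhoMoment (n - 1) ψ) ≤ K * (C' * rhoMoment 0 ψ) :=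
    (mul_le_of_le_one_left (mul_nonneg hK (integral_nonneg fun p => by positivity)) hk.2).trans
      (mul_le_mul_of_nonneg_left hle' hK)
  calc _ ≤ (1 + 2 * (|Theta0| + ω)) * (C * rhoMoment 0 ψ) + 4 * (K * (C' * rhoMoment 0 ψ)) := by
        gcongr
    _ = _ := by ring

lemma abs_pow_le_one_add_pow_sq (x : ℝ) (n : ℕ) : |x| ^ n ≤ 1 + (x ^ n) ^ 2 := by
  rw [← abs_pow, ← sq_abs (x ^ n)]
  nlinarith [sq_nonneg (|x ^ n| - 1), abs_nonneg (x ^ n)]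

theorem exists_setIntegral_abs_pow_mul_energyDensity_le (hω : 0 ≤ ω) (R : ℝ) (n : ℕ) :
    ∃ C : ℝ, 0 ≤ C ∧
    ∀ (B : ℝ) (m : ℤ) (lam : ℝ) (ψ : ℝ × ℝ → ℂ), 1 ≤ B → HasFarGap B R (ω + 1) →
      IsQEigenfunction B m lam ψ → lam ≤ Theta0 + ω * B ^ (-(1 : ℝ) / 3) →
        IntegrableOn (fun p => |p.2| ^ n * energyDensity B ψ p) halfPlane ∧
          ∫ p in halfPlane, |p.2| ^ n * energyDensity B ψ p ≤
            C * ∫ p in halfPlane, ‖ψ p‖ ^ 2 := by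
  obtain ⟨C₀, hC₀, hzero⟩ := exists_setIntegral_pow_sq_mul_energyDensity_le hω R 0
  obtain ⟨C, hC, hpow⟩ := exists_setIntegral_pow_sq_mul_energyDensity_le hω R n
  refine ⟨C₀ + C, add_nonneg hC₀ hC, fun B m lam ψ hB hgap h hlam => ?_⟩
  obtain ⟨hint₀, hle₀⟩ := hzero B m lam ψ hB hgap h hlam
  obtain ⟨hint, hle⟩ := hpow B m lam ψ hB hgap h hlam
  simp only [pow_zero, one_pow, one_mul] at hint₀ hle₀
  have hnonneg (p : ℝ × ℝ) := energyDensity_nonneg (zero_le_one.trans hB) ψ p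
  have hbound (p : ℝ × ℝ) : |p.2| ^ n * energyDensity B ψ p ≤
      energyDensity B ψ p + (p.2 ^ n) ^ 2 * energyDensity B ψ p := by
    linarith [mul_le_mul_of_nonneg_right (abs_pow_le_one_add_pow_sq p.2 n) (hnonneg p)]
  have hcont := continuous_energyDensity h.contDiff_one B
  have hint_abs : IntegrableOn (fun p => |p.2| ^ n * energyDensity B ψ p) halfPlane := by
    refine (hint₀.add hint).mono' (by fun_prop) (.of_forall fun p => ?_)
    rw [norm_of_nonneg (mul_nonneg (by positivity) (hnonneg p))]
    exact hbound p
  refine ⟨hint_abs, (setIntegral_mono hint_abs (hint₀.add hint) hbound).trans ?_⟩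
  simp only [Pi.add_apply]
  rw [integral_add hint₀ hint, ← rhoMoment_zero, add_mul]
  exact add_le_add hle₀ hle

end Moments

/-- Corollary 3.2: polynomial moment bounds in `ρ` for low-energy
eigenfunctions of `Q_m(B)`. -/
theorem statement9 (ω : ℝ) (hω : 0 < ω) (n : ℕ) :
    ∃ B₀ C₀ : ℝ, 0 < B₀ ∧ 0 < C₀ ∧
      ∀ B : ℝ, B₀ < B → ∀ (m : ℤ) (lam : ℝ) (ψ : ℝ × ℝ → ℂ),
        IsQEigenfunction B m lam ψ →
        lam ≤ Theta0 + ω * B ^ (-(1:ℝ)/3) →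
        (∫⁻ p in halfPlane, ENNReal.ofReal (|p.2| ^ n *
            (‖ψ p‖ ^ 2 + ‖fderiv ℝ ψ p ((1:ℝ), (0:ℝ))‖ ^ 2
              + B ^ (-(1:ℝ)/3) * ‖fderiv ℝ ψ p ((0:ℝ), (1:ℝ))‖ ^ 2)))
          ≤ ENNReal.ofReal (C₀ * ∫ p in halfPlane, ‖ψ p‖ ^ 2) := by
  obtain ⟨R, hgap⟩ := exists_eventually_hasFarGap (by linarith : 0 ≤ ω + 1)
  obtain ⟨B₀, hB₀⟩ := eventually_atTop.1 hgap
  obtain ⟨C, hC, hmoment⟩ := exists_setIntegral_abs_pow_mul_energyDensity_le hω.le R n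
  refine ⟨max 1 B₀, C + 1, by positivity, by positivity, fun B hB m lam ψ h hlam => ?_⟩
  obtain ⟨hB_one, hB_gap⟩ := max_lt_iff.1 hB
  obtain ⟨hint, hle⟩ := hmoment B m lam ψ hB_one.le (hB₀ B hB_gap.le) h hlam
  have hnonneg (p : ℝ × ℝ) : 0 ≤ |p.2| ^ n * energyDensity B ψ p :=
    mul_nonneg (by positivity) (energyDensity_nonneg (zero_le_one.trans hB_one.le) ψ p)
  refine (ofReal_integral_eq_lintegral_ofReal hint (.of_forall hnonneg)).ge.trans
    (ENNReal.ofReal_le_ofReal (hle.trans ?_))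
  gcongr
  exact le_add_of_nonneg_right zero_le_one
end
end

section
/- Let ζ, ν ∈ ℝ and 0 < a < 1/3. Let u ∈ C^∞(ℝ;ℝ) be such that for every k ∈ ℕ the functions e^{a|ρ|³}·u, e^{a|ρ|³}·ρᵏ·u and e^{a|ρ|³}·u^{(k)} belong to L²(ℝ). If w ∈ C²(ℝ;ℝ) ∩ L²(ℝ) satisfies −w″(ρ) + ((ζ + ρ²)² − ν)·w(ρ) = u(ρ) for all ρ ∈ ℝ, then for every b with 0 < b < a and every ℓ ∈ ℕ, the functions e^{b|ρ|³}·w, e^{b|ρ|³}·ρ^ℓ·w and e^{b|ρ|³}·w^{(ℓ)} belong to L²(ℝ). -/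
noncomputable section
open MeasureTheory Real Set Filter

/-!
Write the equation as `w'' = V w - u` with `V = (ζ + ρ²)² - ν`, and let `E = exp (-(b ρ³))` with
`0 < b < a`. Then `E'' = (9 b² ρ⁴ - 6 b ρ) E`, and `9 b² ρ⁴ ≤ V` far out because `b < 1/3`, so
`E'' + E ≤ V E` near `+∞`: the term `-6 b ρ` leaves room for a source of size `E`. The weighted `L²`
bounds on `u` and `u'` give `u = O(E)`, and the maximum principle compares `w` with a multiple of
`E`; since `w ∈ L²`, it is small at arbitrarily large points, which excludes the growing solution.
The equation turns this into a bound on `w''`, the mean value theorem interpolates `w'` between `w`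
and `w''`, and differentiating the equation gives all higher derivatives. The reflection `ρ ↦ -ρ`
handles `-∞`.
-/

open Asymptotics Topology
open scoped ContDiff

section MaximumPrinciple

variable {g g' g'' : ℝ → ℝ}

lemma not_isLocalMax_of_hasDerivAt_of_pos {m c : ℝ} (hg : ∀ᶠ x in 𝓝 m, HasDerivAt g (g' x) x)
    (hg' : HasDerivAt g' c m) (hc : 0 < c) : ¬ IsLocalMax g m := by
  intro hmax
  have hderiv : deriv g =ᶠ[𝓝 m] g' := hg.mono fun x hx => hx.deriv
  have hpos : 0 < deriv (deriv g) m := by rwa [hderiv.deriv_eq, hg'.deriv]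
  have hmin : IsLocalMin g m :=
    isLocalMin_of_deriv_deriv_pos hpos hmax.deriv_eq_zero hg.self_of_nhds.continuousAt
  have hconst : g =ᶠ[𝓝 m] fun _ => g m := by
    filter_upwards [hmax, hmin] with x using le_antisymm
  refine hpos.ne' ?_
  rw [hconst.deriv.deriv_eq]
  simp

lemma nonpos_of_hasDerivAt_of_pos_of_frequently_lt {R : ℝ}
    (hg : ∀ x, R ≤ x → HasDerivAt g (g' x) x) (hg' : ∀ x, R < x → HasDerivAt g' (g'' x) x)
    (hconvex : ∀ x, R < x → 0 < g x → 0 < g'' x) (hR : g R ≤ 0)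
    (hsmall : ∀ ε > 0, ∃ᶠ x in atTop, g x < ε) {x : ℝ} (hx : R ≤ x) : g x ≤ 0 := by
  by_contra! hgx
  obtain ⟨y, hgy, hxy⟩ := ((hsmall _ hgx).and_eventually (eventually_gt_atTop x)).exists
  obtain ⟨m, ⟨hRm, hmy⟩, hmax⟩ := isCompact_Icc.exists_isMaxOn (nonempty_Icc.2 (hx.trans hxy.le))
    fun t ht => (hg t ht.1).continuousAt.continuousWithinAt
  have hgm : g x ≤ g m := hmax ⟨hx, hxy.le⟩
  replace hRm : R < m := hRm.lt_of_ne (by rintro rfl; linarith)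
  replace hmy : m < y := hmy.lt_of_ne (by rintro rfl; linarith)
  exact not_isLocalMax_of_hasDerivAt_of_pos ((eventually_ge_nhds hRm).mono hg) (hg' m hRm)
    (hconvex m hRm (hgx.trans_le hgm)) (hmax.isLocalMax (Icc_mem_nhds hRm hmy))

end MaximumPrinciple

section Comparison

variable {V u w w' E E' E'' : ℝ → ℝ}

lemma le_mul_of_supersolution {R C D : ℝ} (hw : ∀ x, R ≤ x → HasDerivAt w (w' x) x)
    (hw' : ∀ x, R < x → HasDerivAt w' (V x * w x - u x) x)
    (hE : ∀ x, R ≤ x → HasDerivAt E (E' x) x) (hE' : ∀ x, R < x → HasDerivAt E' (E'' x) x)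
    (hE_pos : ∀ x, R ≤ x → 0 < E x) (hV : ∀ x, R < x → 0 ≤ V x)
    (hsuper : ∀ x, R < x → E'' x + E x ≤ V x * E x) (hu : ∀ x, R < x → u x ≤ C * E x)
    (hCD : C < D) (hD : 0 ≤ D) (hwR : w R ≤ D * E R)
    (hsmall : ∀ ε > 0, ∃ᶠ x in atTop, w x < ε) {x : ℝ} (hx : R ≤ x) : w x ≤ D * E x := by
  refine sub_nonpos.1 <| nonpos_of_hasDerivAt_of_pos_of_frequently_lt
    (g := fun x => w x - D * E x) (fun x hx => (hw x hx).sub ((hE x hx).const_mul D))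
    (fun x hx => (hw' x hx).sub ((hE' x hx).const_mul D)) ?_ (sub_nonpos.2 hwR) ?_ hx
  · intro x hx hgx
    have hVg : 0 ≤ V x * (w x - D * E x) := mul_nonneg (hV x hx) hgx.le
    have hDE : D * (E'' x + E x) ≤ D * (V x * E x) := by gcongr; exact hsuper x hx
    have hgap : 0 < (D - C) * E x := mul_pos (sub_pos.2 hCD) (hE_pos x hx.le)
    linarith [hu x hx]
  · intro ε hε
    refine ((hsmall ε hε).and_eventually (eventually_ge_atTop R)).mono fun x ⟨hwx, hRx⟩ => ?_
    linarith [hwx, mul_nonneg hD (hE_pos x hRx).le]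

theorem isBigO_of_supersolution (hw : ∀ᶠ x in atTop, HasDerivAt w (w' x) x)
    (hw' : ∀ᶠ x in atTop, HasDerivAt w' (V x * w x - u x) x)
    (hE : ∀ᶠ x in atTop, HasDerivAt E (E' x) x) (hE' : ∀ᶠ x in atTop, HasDerivAt E' (E'' x) x)
    (hE_pos : ∀ᶠ x in atTop, 0 < E x) (hV : ∀ᶠ x in atTop, 0 ≤ V x)
    (hsuper : ∀ᶠ x in atTop, E'' x + E x ≤ V x * E x) (hu : u =O[atTop] E)
    (hsmall : ∀ ε > 0, ∃ᶠ x in atTop, |w x| < ε) : w =O[atTop] E := by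
  obtain ⟨C, hC, huC⟩ := hu.exists_nonneg
  obtain ⟨R, hR⟩ := eventually_atTop.1 (hw.and <| hw'.and <| hE.and <| hE'.and <| hE_pos.and <|
    hV.and <| hsuper.and huC.bound)
  choose! hw hw' hE hE' hE_pos hV hsuper huC using hR
  have hu_abs : ∀ x, R ≤ x → |u x| ≤ C * E x := fun x hx => by
    simpa only [norm_eq_abs, abs_of_pos (hE_pos x hx)] using huC x hx
  set D : ℝ := max (C + 1) (|w R| / E R)
  have hCD : C < D := (lt_add_one C).trans_le (le_max_left _ _)
  have hwR : |w R| ≤ D * E R := (div_le_iff₀ (hE_pos R le_rfl)).1 (le_max_right _ _)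
  refine IsBigO.of_bound D ((eventually_ge_atTop R).mono fun x hx => ?_)
  rw [norm_eq_abs, norm_eq_abs, abs_of_pos (hE_pos x hx), abs_le']
  constructor
  · exact le_mul_of_supersolution hw (fun x hx => hw' x hx.le) hE (fun x hx => hE' x hx.le) hE_pos
      (fun x hx => hV x hx.le) (fun x hx => hsuper x hx.le)
      (fun x hx => (le_abs_self _).trans (hu_abs x hx.le)) hCD (hC.trans hCD.le)
      ((le_abs_self _).trans hwR)
      (fun ε hε => (hsmall ε hε).mono fun x hx => (le_abs_self _).trans_lt hx) hx
  · exact le_mul_of_supersolution (w := fun x => -w x) (u := fun x => -u x)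
      (fun x hx => (hw x hx).neg) (fun x hx => (hw' x hx.le).neg.congr_deriv (by ring)) hE
      (fun x hx => hE' x hx.le) hE_pos (fun x hx => hV x hx.le) (fun x hx => hsuper x hx.le)
      (fun x hx => (neg_le_abs _).trans (hu_abs x hx.le)) hCD (hC.trans hCD.le)
      ((neg_le_abs _).trans hwR)
      (fun ε hε => (hsmall ε hε).mono fun x hx => (neg_le_abs _).trans_lt hx) hx

end Comparison

section Derivative

variable {f f' f'' E : ℝ → ℝ}

theorem isBigO_deriv_of_antitoneOn {R : ℝ} (hE : AntitoneOn E (Ici R)) (hE₀ : ∀ x, R ≤ x → 0 ≤ E x)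
    (hf : ∀ᶠ x in atTop, HasDerivAt f (f' x) x) (hf' : ∀ᶠ x in atTop, HasDerivAt f' (f'' x) x)
    (hfE : f =O[atTop] E) (hf''E : f'' =O[atTop] E) : f' =O[atTop] E := by
  obtain ⟨A, hA, hfA⟩ := hfE.exists_nonneg
  obtain ⟨B, hB, hf''B⟩ := hf''E.exists_nonneg
  obtain ⟨S, hS⟩ := eventually_atTop.1 ((eventually_ge_atTop R).and <| hf.and <| hf'.and <|
    hfA.bound.and hf''B.bound)
  choose! hRS hf hf' hfA hf''B using hS
  simp only [norm_eq_abs] at hfA hf''B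
  refine IsBigO.of_bound (2 * A + B) ((eventually_ge_atTop S).mono fun x hx => ?_)
  have hE_le : ∀ y, x ≤ y → |E y| ≤ E x := fun y hxy => by
    rw [abs_of_nonneg (hE₀ y (hRS y (hx.trans hxy)))]
    exact hE (hRS x hx) (hRS y (hx.trans hxy)) hxy
  obtain ⟨c, ⟨hxc, hcx⟩, hc⟩ := exists_hasDerivAt_eq_slope f f' (lt_add_one x)
    (fun y hy => (hf y (hx.trans hy.1)).continuousAt.continuousWithinAt)
    (fun y hy => hf y (hx.trans hy.1.le))
  obtain ⟨d, ⟨hxd, -⟩, hd⟩ := exists_hasDerivAt_eq_slope f' f'' hxc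
    (fun y hy => (hf' y (hx.trans hy.1)).continuousAt.continuousWithinAt)
    (fun y hy => hf' y (hx.trans hy.1.le))
  have hexpand : f' x = f (x + 1) - f x - f'' d * (c - x) := by
    rw [eq_div_iff (sub_pos.2 hxc).ne'] at hd
    rw [hd, hc]
    ring
  have hd_le : |f'' d * (c - x)| ≤ B * E x := by
    rw [abs_mul, abs_of_pos (sub_pos.2 hxc)]
    calc |f'' d| * (c - x) ≤ |f'' d| * 1 := by gcongr; linarith
      _ ≤ B * |E d| := by simpa using hf''B d (hx.trans hxd.le)
      _ ≤ B * E x := by gcongr; exact hE_le d hxd.le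
  have hx_le : |f x| ≤ A * E x := (hfA x hx).trans (by gcongr; exact hE_le x le_rfl)
  have hx1_le : |f (x + 1)| ≤ A * E x :=
    (hfA (x + 1) (by linarith)).trans (by gcongr; exact hE_le (x + 1) (by linarith))
  rw [norm_eq_abs, norm_eq_abs, abs_of_nonneg (hE₀ x (hRS x hx)), hexpand]
  linarith [abs_sub (f (x + 1) - f x) (f'' d * (c - x)), abs_sub (f (x + 1)) (f x)]

lemma hasDerivAt_iteratedDeriv_of_contDiff_infty (hf : ContDiff ℝ ∞ f) (k : ℕ) (x : ℝ) :
    HasDerivAt (iteratedDeriv k f) (iteratedDeriv (k + 1) f x) x := by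
  rw [iteratedDeriv_succ]
  exact (hf.differentiable_iteratedDeriv k (mod_cast ENat.natCast_lt_top k) x).hasDerivAt

end Derivative

section WeightedL2

variable {f f' φ : ℝ → ℝ}

lemma frequently_atTop_abs_lt_of_integrable_sq (hf : Integrable fun x => f x ^ 2) {ε : ℝ}
    (hε : 0 < ε) : ∃ᶠ x in atTop, |f x| < ε := by
  intro hge
  obtain ⟨R, hR⟩ := eventually_atTop.1 hge
  have hsub : Ici R ⊆ {x | ε ^ 2 ≤ ‖f x ^ 2‖} := fun x hx => by
    simpa [abs_of_pos hε] using pow_le_pow_left₀ hε.le (not_lt.1 (hR x hx)) 2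
  exact ((measure_mono hsub).trans_lt (hf.measure_norm_ge_lt_top (pow_pos hε 2))).ne volume_Ici

lemma sq_le_setIntegral_Ioi_sq_add_sq {x : ℝ} (hf : ∀ y, x ≤ y → HasDerivAt f (f' y) y)
    (hfL2 : MemLp f 2 (volume.restrict (Ioi x))) (hf'L2 : MemLp f' 2 (volume.restrict (Ioi x))) :
    f x ^ 2 ≤ ∫ y in Ioi x, (f y ^ 2 + f' y ^ 2) := by
  have hsq : ∀ y, x ≤ y → HasDerivAt (fun y => f y ^ 2) (2 * (f y * f' y)) y := fun y hy =>
    ((hf y hy).pow 2).congr_deriv (by push_cast; ring)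
  have hint : IntegrableOn (fun y => 2 * (f y * f' y)) (Ioi x) :=
    (hfL2.integrable_mul hf'L2).const_mul 2
  have hlim : Tendsto (fun y => f y ^ 2) atTop (𝓝 0) :=
    tendsto_zero_of_hasDerivAt_of_integrableOn_Ioi (fun y hy => hsq y (mem_Ioi.1 hy).le) hint
      hfL2.integrable_sq
  calc f x ^ 2 = ∫ y in Ioi x, -(2 * (f y * f' y)) := by
        rw [integral_neg, integral_Ioi_of_hasDerivAt_of_tendsto' hsq hint hlim]
        ring
    _ ≤ ∫ y in Ioi x, (f y ^ 2 + f' y ^ 2) :=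
        integral_mono hint.neg (hfL2.integrable_sq.add hf'L2.integrable_sq) fun y => by
          simp only
          linarith [sq_nonneg (f y + f' y)]

lemma memLp_two_const_mul_of_integrableOn_sq_mul {s : Set ℝ} {c : ℝ} (hs : MeasurableSet s)
    (hc : 0 ≤ c) (hcφ : ∀ x ∈ s, c ≤ φ x) (hf : AEStronglyMeasurable f (volume.restrict s))
    (hfφ : IntegrableOn (fun x => (φ x * f x) ^ 2) s) :
    MemLp (fun x => c * f x) 2 (volume.restrict s) := by
  refine (memLp_two_iff_integrable_sq (hf.const_mul c)).2
    (hfφ.mono' ((hf.const_mul c).pow 2) ((ae_restrict_iff' hs).2 (ae_of_all _ fun x hx => ?_)))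
  rw [norm_of_nonneg (sq_nonneg _), mul_pow, mul_pow]
  gcongr
  exact hcφ x hx

theorem isBigO_inv_of_integrableOn_sq_mul {R : ℝ} (hφ : MonotoneOn φ (Ici R))
    (hφ_pos : ∀ x, R ≤ x → 0 < φ x) (hf : ∀ x, R ≤ x → HasDerivAt f (f' x) x)
    (hf' : AEStronglyMeasurable f' (volume.restrict (Ioi R)))
    (hfφ : IntegrableOn (fun x => (φ x * f x) ^ 2) (Ioi R))
    (hf'φ : IntegrableOn (fun x => (φ x * f' x) ^ 2) (Ioi R)) :
    f =O[atTop] fun x => (φ x)⁻¹ := by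
  set M := ∫ y in Ioi R, ((φ y * f y) ^ 2 + (φ y * f' y) ^ 2)
  refine IsBigO.of_bound √M ((eventually_ge_atTop R).mono fun x hx => ?_)
  have hφx := hφ_pos x hx
  have hsub : Ioi x ⊆ Ioi R := Ioi_subset_Ioi hx
  have hφ_le : ∀ y ∈ Ioi x, φ x ≤ φ y := fun y hy =>
    hφ hx (hx.trans (mem_Ioi.1 hy).le) (mem_Ioi.1 hy).le
  have hf_meas : AEStronglyMeasurable f (volume.restrict (Ioi x)) :=
    ContinuousOn.aestronglyMeasurable (fun y hy =>
      (hf y (hx.trans (mem_Ioi.1 hy).le)).continuousAt.continuousWithinAt) measurableSet_Ioi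
  have hfL2 := memLp_two_const_mul_of_integrableOn_sq_mul measurableSet_Ioi hφx.le hφ_le hf_meas
    (hfφ.mono_set hsub)
  have hf'L2 := memLp_two_const_mul_of_integrableOn_sq_mul measurableSet_Ioi hφx.le hφ_le
    (hf'.mono_set hsub) (hf'φ.mono_set hsub)
  have hsq : (φ x * f x) ^ 2 ≤ M :=
    calc (φ x * f x) ^ 2 ≤ ∫ y in Ioi x, ((φ x * f y) ^ 2 + (φ x * f' y) ^ 2) :=
          sq_le_setIntegral_Ioi_sq_add_sq (fun y hy => (hf y (hx.trans hy)).const_mul (φ x))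
            hfL2 hf'L2
      _ ≤ ∫ y in Ioi x, ((φ y * f y) ^ 2 + (φ y * f' y) ^ 2) := by
          refine setIntegral_mono_on (hfL2.integrable_sq.add hf'L2.integrable_sq)
            ((hfφ.add hf'φ).mono_set hsub) measurableSet_Ioi fun y hy => ?_
          have := hφ_le y hy
          simp only [mul_pow]
          gcongr
      _ ≤ M := setIntegral_mono_set (hfφ.add hf'φ) (ae_of_all _ fun y => by positivity)
          hsub.eventuallyLE
  rw [norm_inv, norm_eq_abs, norm_eq_abs, abs_of_pos hφx, le_mul_inv_iff₀ hφx]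
  calc |f x| * φ x = |φ x * f x| := by rw [abs_mul, abs_of_pos hφx, mul_comm]
    _ ≤ √M := abs_le_sqrt hsq

end WeightedL2

/-- Decay at `+∞` at every cubic-exponential rate below `a`. The rates are kept strictly below `a`
so that the class is stable under multiplication by polynomially bounded functions. -/
def CubicDecay (a : ℝ) (f : ℝ → ℝ) : Prop :=
  ∀ b ∈ Ioo 0 a, f =O[atTop] fun x => exp (-(b * x ^ 3))

section CubicDecay

variable {a b : ℝ} {f f' f'' g : ℝ → ℝ}

lemma monotone_exp_mul_cube (hb : 0 ≤ b) : Monotone fun x : ℝ => exp (b * x ^ 3) :=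
  exp_monotone.comp ((Odd.strictMono_pow (by decide)).monotone.const_mul hb)

lemma antitone_exp_neg_mul_cube (hb : 0 ≤ b) : Antitone fun x : ℝ => exp (-(b * x ^ 3)) :=
  exp_monotone.comp_antitone ((Odd.strictMono_pow (by decide)).monotone.const_mul hb).neg

lemma isBigO_pow_exp_mul_cube (k : ℕ) (hb : 0 < b) :
    (fun x : ℝ => x ^ k) =O[atTop] fun x => exp (b * x ^ 3) := by
  refine (isLittleO_pow_exp_pos_mul_atTop k hb).isBigO.trans (IsBigO.of_norm_eventuallyLE ?_)
  filter_upwards [eventually_ge_atTop 1] with x hx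
  rw [norm_of_nonneg (exp_nonneg _)]
  gcongr
  exact le_self_pow₀ hx (by decide)

lemma CubicDecay.mul_of_isBigO_pow {k : ℕ} (hf : CubicDecay a f)
    (hg : g =O[atTop] fun x => x ^ k) : CubicDecay a fun x => g x * f x := by
  rintro b ⟨hb, hba⟩
  obtain ⟨c, hbc, hca⟩ := exists_between hba
  refine ((hg.trans (isBigO_pow_exp_mul_cube k (sub_pos.2 hbc))).mul
    (hf c ⟨hb.trans hbc, hca⟩)).congr_right fun x => ?_
  rw [← exp_add]
  ring_nf

lemma isBigO_iteratedDeriv_of_hasTemperateGrowth (hg : g.HasTemperateGrowth) (n : ℕ) :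
    ∃ k : ℕ, iteratedDeriv n g =O[atTop] fun x => x ^ k := by
  obtain ⟨k, hk⟩ := hg.isBigO n
  have hlin : (fun x : ℝ => 1 + ‖x‖) =O[atTop] fun x => x :=
    (isLittleO_const_id_atTop (1 : ℝ)).isBigO.add (isBigO_refl _ _).norm_left
  refine ⟨k, IsBigO.trans ?_ (hlin.pow k)⟩
  refine (hk.mono le_top).norm_left.congr_left ?_ |>.of_norm_left
  exact fun x => norm_iteratedFDeriv_eq_norm_iteratedDeriv

theorem cubicDecay_of_integrable_sq_mul (ha : 0 ≤ a) (hf : ∀ x, HasDerivAt f (f' x) x)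
    (hf' : AEStronglyMeasurable f')
    (hfL2 : Integrable fun x => (exp (a * |x| ^ 3) * f x) ^ 2)
    (hf'L2 : Integrable fun x => (exp (a * |x| ^ 3) * f' x) ^ 2) : CubicDecay a f := by
  have hcongr : ∀ {h : ℝ → ℝ}, Integrable (fun x => (exp (a * |x| ^ 3) * h x) ^ 2) →
      IntegrableOn (fun x => (exp (a * x ^ 3) * h x) ^ 2) (Ioi 0) := fun hh =>
    hh.integrableOn.congr_fun (fun x hx => by simp only [abs_of_pos (mem_Ioi.1 hx)])
      measurableSet_Ioi
  have hrate : f =O[atTop] fun x => (exp (a * x ^ 3))⁻¹ :=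
    isBigO_inv_of_integrableOn_sq_mul ((monotone_exp_mul_cube ha).monotoneOn _)
      (fun x _ => exp_pos _) (fun x _ => hf x) hf'.restrict (hcongr hfL2) (hcongr hf'L2)
  refine fun b hb => hrate.trans (IsBigO.of_norm_eventuallyLE ?_)
  filter_upwards [eventually_ge_atTop 0] with x hx
  rw [norm_of_nonneg (by positivity), ← exp_neg]
  gcongr
  exact hb.2.le

lemma CubicDecay.intermediate_deriv (hf : ∀ x, HasDerivAt f (f' x) x)
    (hf' : ∀ x, HasDerivAt f' (f'' x) x) (hfa : CubicDecay a f) (hf''a : CubicDecay a f'') :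
    CubicDecay a f' := fun b hb =>
  isBigO_deriv_of_antitoneOn ((antitone_exp_neg_mul_cube hb.1.le).antitoneOn (Ici 0))
    (fun _ _ => exp_nonneg _) (.of_forall hf) (.of_forall hf') (hfa b hb) (hf''a b hb)

lemma CubicDecay.isBigO_exp_neg_sq (hf : CubicDecay a f) (hb : b ∈ Ioo 0 a) :
    (fun x => (exp (b * |x| ^ 3) * f x) ^ 2) =O[atTop] fun x => exp (-1 * x ^ 2) := by
  obtain ⟨c, hbc, hca⟩ := exists_between hb.2
  have hgap : (fun x : ℝ => exp (b * |x| ^ 3) * f x) =O[atTop]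
      fun x => exp (-((c - b) * x ^ 3)) := by
    refine ((isBigO_refl _ _).mul (hf c ⟨hb.1.trans hbc, hca⟩)).trans (EventuallyEq.isBigO ?_)
    filter_upwards [eventually_ge_atTop 0] with x hx
    rw [abs_of_nonneg hx, ← exp_add]
    ring_nf
  refine (hgap.pow 2).trans (IsBigO.of_norm_eventuallyLE ?_)
  filter_upwards [eventually_ge_atTop (1 / (2 * (c - b)))] with x hx
  rw [div_le_iff₀ (by linarith)] at hx
  rw [norm_of_nonneg (by positivity), ← exp_nat_mul]
  refine exp_le_exp.2 ?_
  push_cast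
  linarith [mul_le_mul_of_nonneg_right hx (sq_nonneg x)]

lemma CubicDecay.pow_mul_iteratedDeriv_neg {l : ℕ}
    (hf : CubicDecay a (iteratedDeriv l fun x => f (-x))) (m : ℕ) :
    CubicDecay a fun x => (-x) ^ m * iteratedDeriv l f (-x) := by
  have hsign : (fun x : ℝ => (-1) ^ l * (-x) ^ m) =O[atTop] fun x => x ^ m :=
    .of_bound 1 (by simp)
  convert hf.mul_of_isBigO_pow hsign using 2 with x
  rw [iteratedDeriv_comp_neg, smul_eq_mul, mul_mul_mul_comm, ← mul_pow, neg_one_mul, neg_neg,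
    one_pow, one_mul]

theorem integrable_sq_mul_of_cubicDecay (hf : Continuous f) (hright : CubicDecay a f)
    (hleft : CubicDecay a fun x => f (-x)) (hb : b ∈ Ioo 0 a) :
    Integrable fun x => (exp (b * |x| ^ 3) * f x) ^ 2 := by
  have hloc : LocallyIntegrable fun x => (exp (b * |x| ^ 3) * f x) ^ 2 :=
    Continuous.locallyIntegrable (by fun_prop)
  refine hloc.integrable_of_isBigO_cocompact ?_
    ((integrable_exp_neg_mul_sq one_pos).integrableAtFilter _)
  rw [cocompact_eq_atBot_atTop]
  refine IsBigO.sup ?_ (hright.isBigO_exp_neg_sq hb)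
  simpa [Function.comp_def] using
    (hleft.isBigO_exp_neg_sq hb).comp_tendsto tendsto_neg_atBot_atTop

end CubicDecay

section Schrodinger

variable {V u w : ℝ → ℝ} {a : ℝ}

lemma hasDerivAt_exp_neg_mul_cube (b x : ℝ) :
    HasDerivAt (fun x : ℝ => exp (-(b * x ^ 3))) (-(3 * b * x ^ 2) * exp (-(b * x ^ 3))) x :=
  ((hasDerivAt_pow 3 x).const_mul b).fun_neg.exp.congr_deriv (by push_cast; ring)

lemma hasDerivAt_deriv_exp_neg_mul_cube (b x : ℝ) :
    HasDerivAt (fun x : ℝ => -(3 * b * x ^ 2) * exp (-(b * x ^ 3)))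
      ((9 * b ^ 2 * x ^ 4 - 6 * b * x) * exp (-(b * x ^ 3))) x :=
  (((hasDerivAt_pow 2 x).const_mul (3 * b)).fun_neg.mul
    (hasDerivAt_exp_neg_mul_cube b x)).congr_deriv (by push_cast; ring)

theorem cubicDecay_of_schrodinger {w' : ℝ → ℝ}
    (hV : ∀ b ∈ Ioo 0 a, ∀ᶠ x in atTop, 9 * b ^ 2 * x ^ 4 ≤ V x)
    (hw : ∀ᶠ x in atTop, HasDerivAt w (w' x) x)
    (hw' : ∀ᶠ x in atTop, HasDerivAt w' (V x * w x - u x) x)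
    (hsmall : ∀ ε > 0, ∃ᶠ x in atTop, |w x| < ε) (hu : CubicDecay a u) : CubicDecay a w := by
  intro b hb
  have hb₀ : 0 < b := hb.1
  refine isBigO_of_supersolution hw hw' (.of_forall (hasDerivAt_exp_neg_mul_cube b))
    (.of_forall (hasDerivAt_deriv_exp_neg_mul_cube b)) (.of_forall fun _ => exp_pos _) ?_ ?_
    (hu b hb) hsmall
  · filter_upwards [hV b hb] with x hVx using le_trans (by positivity) hVx
  · filter_upwards [hV b hb, eventually_ge_atTop (1 / (6 * b))] with x hVx hx
    rw [div_le_iff₀ (by positivity)] at hx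
    rw [← add_one_mul]
    gcongr
    linarith

lemma contDiff_infty_of_schrodinger (hV : ContDiff ℝ ∞ V) (hu : ContDiff ℝ ∞ u)
    (hw : ContDiff ℝ 2 w) (hw'' : deriv (deriv w) = fun x => V x * w x - u x) :
    ContDiff ℝ ∞ w := by
  obtain ⟨hdiff, -, hw'⟩ :=
    contDiff_succ_iff_deriv.1 (show ContDiff ℝ (1 + 1) w by rwa [one_add_one_eq_two])
  have hdiff' : Differentiable ℝ (deriv w) := hw'.differentiable one_ne_zero
  refine contDiff_infty.2 fun n => ?_
  induction n with
  | zero => exact hw.of_le (by norm_num)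
  | succ n ih =>
    have hw''n : ContDiff ℝ n (deriv (deriv w)) :=
      hw'' ▸ ((contDiff_infty.1 hV n).mul ih).sub (contDiff_infty.1 hu n)
    have hw'n : ContDiff ℝ (n + 1) (deriv w) :=
      contDiff_succ_iff_deriv.2 ⟨hdiff', by simp, hw''n⟩
    exact contDiff_succ_iff_deriv.2 ⟨hdiff, by simp, hw'n.of_le le_self_add⟩

lemma iteratedDeriv_add_two_of_schrodinger (hV : ContDiff ℝ ∞ V) (hu : ContDiff ℝ ∞ u)
    (hw : ContDiff ℝ ∞ w) (hw'' : deriv (deriv w) = fun x => V x * w x - u x) (l : ℕ) :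
    iteratedDeriv (l + 2) w = fun x => ∑ i ∈ Finset.range (l + 1),
      l.choose i * iteratedDeriv i V x * iteratedDeriv (l - i) w x - iteratedDeriv l u x := by
  funext x
  have hVl := (contDiff_infty.1 hV l).contDiffAt (x := x)
  have hwl := (contDiff_infty.1 hw l).contDiffAt (x := x)
  rw [iteratedDeriv_succ', iteratedDeriv_succ', hw'',
    iteratedDeriv_fun_sub (hVl.mul hwl) (contDiff_infty.1 hu l).contDiffAt,
    iteratedDeriv_fun_mul hVl hwl]

theorem cubicDecay_iteratedDeriv_of_schrodinger (hV : V.HasTemperateGrowth)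
    (hu : ContDiff ℝ ∞ u) (hw : ContDiff ℝ ∞ w) (hw'' : deriv (deriv w) = fun x => V x * w x - u x)
    (hua : ∀ k, CubicDecay a (iteratedDeriv k u)) (hwa : CubicDecay a w) (l : ℕ) :
    CubicDecay a (iteratedDeriv l w) := by
  have hstep : ∀ l, (∀ j ≤ l, CubicDecay a (iteratedDeriv j w)) →
      CubicDecay a (iteratedDeriv (l + 2) w) := by
    intro l hl b hb
    rw [iteratedDeriv_add_two_of_schrodinger hV.1 hu hw hw'']
    refine (IsBigO.fun_sum fun i _ => ?_).sub (hua l b hb)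
    obtain ⟨k, hk⟩ := isBigO_iteratedDeriv_of_hasTemperateGrowth hV i
    exact (hl _ (l.sub_le i)).mul_of_isBigO_pow (hk.const_mul_left _) b hb
  have hzero : CubicDecay a (iteratedDeriv 0 w) := by rwa [iteratedDeriv_zero]
  have htwo := hstep 0 fun j hj => Nat.le_zero.1 hj ▸ hzero
  have hderiv : ∀ k x, HasDerivAt (iteratedDeriv k w) (iteratedDeriv (k + 1) w x) x :=
    hasDerivAt_iteratedDeriv_of_contDiff_infty hw
  induction l using Nat.strong_induction_on with
  | _ l ih =>
    match l with
    | 0 => exact hzero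
    | 1 => exact hzero.intermediate_deriv (hderiv 0) (hderiv 1) htwo
    | l + 2 => exact hstep l fun j hj => ih j (by omega)

theorem cubicDecay_iteratedDeriv_of_integrable_sq (ha : 0 ≤ a) (hV : V.HasTemperateGrowth)
    (hV_ge : ∀ b ∈ Ioo 0 a, ∀ᶠ x in atTop, 9 * b ^ 2 * x ^ 4 ≤ V x) (hu : ContDiff ℝ ∞ u)
    (hua : ∀ k, Integrable fun x => (exp (a * |x| ^ 3) * iteratedDeriv k u x) ^ 2)
    (hw : ContDiff ℝ 2 w) (hwL2 : Integrable fun x => w x ^ 2)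
    (heq : ∀ x, -deriv (deriv w) x + V x * w x = u x) (l : ℕ) :
    CubicDecay a (iteratedDeriv l w) := by
  have hw'' : deriv (deriv w) = fun x => V x * w x - u x := by
    funext x
    linarith [heq x]
  have hw_smooth : ContDiff ℝ ∞ w := contDiff_infty_of_schrodinger hV.1 hu hw hw''
  have hu_decay : ∀ k, CubicDecay a (iteratedDeriv k u) := fun k =>
    cubicDecay_of_integrable_sq_mul ha (hasDerivAt_iteratedDeriv_of_contDiff_infty hu k)
      (hu.continuous_iteratedDeriv (k + 1) (mod_cast le_top)).aestronglyMeasurable (hua k)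
      (hua (k + 1))
  have hderiv : ∀ k x, HasDerivAt (iteratedDeriv k w) (iteratedDeriv (k + 1) w x) x :=
    hasDerivAt_iteratedDeriv_of_contDiff_infty hw_smooth
  refine cubicDecay_iteratedDeriv_of_schrodinger hV hu hw_smooth hw'' hu_decay ?_ l
  refine cubicDecay_of_schrodinger hV_ge (w' := deriv w) (.of_forall fun x => ?_)
    (.of_forall fun x => ?_) (fun _ => frequently_atTop_abs_lt_of_integrable_sq hwL2)
    (by simpa only [iteratedDeriv_zero] using hu_decay 0)
  · simpa only [iteratedDeriv_zero, zero_add, iteratedDeriv_one] using hderiv 0 x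
  · simpa only [iteratedDeriv_succ', iteratedDeriv_zero, hw''] using hderiv 1 x

theorem statement19_general (hV : V.HasTemperateGrowth)
    (hV_ge : ∀ b ∈ Ioo 0 a, ∀ᶠ x in cocompact ℝ, 9 * b ^ 2 * x ^ 4 ≤ V x)
    (hu : ContDiff ℝ ∞ u)
    (hua : ∀ k, Integrable fun x => (exp (a * |x| ^ 3) * iteratedDeriv k u x) ^ 2)
    (hw : ContDiff ℝ 2 w) (hwL2 : Integrable fun x => w x ^ 2)
    (heq : ∀ x, -deriv (deriv w) x + V x * w x = u x) {b : ℝ} (hb : b ∈ Ioo 0 a) (m l : ℕ) :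
    Integrable fun x => (exp (b * |x| ^ 3) * (x ^ m * iteratedDeriv l w x)) ^ 2 := by
  have ha : 0 ≤ a := hb.1.le.trans hb.2.le
  have hw_smooth : ContDiff ℝ ∞ w :=
    contDiff_infty_of_schrodinger hV.1 hu hw (funext fun x => by linarith [heq x])
  have hright : CubicDecay a (iteratedDeriv l w) :=
    cubicDecay_iteratedDeriv_of_integrable_sq ha hV
      (fun c hc => (hV_ge c hc).filter_mono atTop_le_cocompact) hu hua hw hwL2 heq l
  have hleft : CubicDecay a (iteratedDeriv l fun x => w (-x)) := by
    refine cubicDecay_iteratedDeriv_of_integrable_sq (V := fun x => V (-x)) (u := fun x => u (-x))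
      ha (by fun_prop) (fun c hc => ?_) (hu.comp contDiff_neg) (fun k => ?_)
      (hw.comp contDiff_neg) hwL2.comp_neg (fun x => ?_) l
    · have := tendsto_neg_atTop_atBot.eventually ((hV_ge c hc).filter_mono atBot_le_cocompact)
      simpa [Even.neg_pow (by decide : Even 4)] using this
    · simpa [iteratedDeriv_comp_neg, mul_pow, ← pow_mul, mul_comm k] using (hua k).comp_neg
    · have hderiv : deriv (fun x => w (-x)) = fun x => -deriv w (-x) :=
        funext fun x => deriv_comp_neg w x
      change -deriv (deriv fun x => w (-x)) x + V (-x) * w (-x) = u (-x)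
      simpa [hderiv, deriv_comp_neg] using heq (-x)
  have hcont : Continuous (iteratedDeriv l w) :=
    hw_smooth.continuous_iteratedDeriv l (mod_cast le_top)
  refine integrable_sq_mul_of_cubicDecay (by fun_prop)
    (hright.mul_of_isBigO_pow (isBigO_refl (fun x : ℝ => x ^ m) atTop))
    (hleft.pow_mul_iteratedDeriv_neg m) hb

end Schrodinger

lemma eventually_cocompact_mul_pow_four_le_montgomery (ζ ν : ℝ) {c : ℝ} (hc : c < 1) :
    ∀ᶠ x : ℝ in cocompact ℝ, c * x ^ 4 ≤ (ζ + x ^ 2) ^ 2 - ν := by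
  have hsq : Tendsto (fun x : ℝ => x ^ 2) (cocompact ℝ) atTop := by
    simpa only [norm_eq_abs, sq_abs, Function.comp_def] using
      (tendsto_pow_atTop two_ne_zero).comp (tendsto_norm_cocompact_atTop (E := ℝ))
  filter_upwards [hsq.eventually_ge_atTop 1,
    hsq.eventually_ge_atTop ((2 * |ζ| + |ν|) / (1 - c))] with x hx1 hx
  rw [div_le_iff₀ (sub_pos.2 hc)] at hx
  have hgap : (2 * |ζ| + |ν|) * x ^ 2 ≤ x ^ 2 * (1 - c) * x ^ 2 := by gcongr
  have hζ : -(2 * |ζ| * x ^ 2) ≤ 2 * ζ * x ^ 2 := by nlinarith [neg_abs_le ζ, sq_nonneg x]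
  have hν : ν ≤ |ν| * x ^ 2 := (le_abs_self ν).trans (le_mul_of_one_le_right (abs_nonneg ν) hx1)
  linarith [sq_nonneg ζ]

/-- Lemma A.9: the regularized resolvent of the Montgomery operator
preserves cubic-exponential decay (up to a loss in the rate), together with all
derivatives and polynomial moments. -/
theorem statement19 (ζ ν a : ℝ) (ha : 0 < a) (ha' : a < 1/3)
    (u : ℝ → ℝ) (hu : ContDiff ℝ (⊤ : ℕ∞) u)
    (hdecay : ∀ k : ℕ,
      Integrable (fun ρ => (Real.exp (a * |ρ| ^ 3) * u ρ) ^ 2) ∧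
      Integrable (fun ρ => (Real.exp (a * |ρ| ^ 3) * ρ ^ k * u ρ) ^ 2) ∧
      Integrable (fun ρ => (Real.exp (a * |ρ| ^ 3) * iteratedDeriv k u ρ) ^ 2))
    (w : ℝ → ℝ) (hw : ContDiff ℝ 2 w) (hwL2 : Integrable (fun ρ => w ρ ^ 2))
    (heq : ∀ ρ : ℝ, -(deriv (deriv w) ρ) + ((ζ + ρ ^ 2) ^ 2 - ν) * w ρ = u ρ) :
    ∀ b : ℝ, 0 < b → b < a → ∀ l : ℕ,
      Integrable (fun ρ => (Real.exp (b * |ρ| ^ 3) * w ρ) ^ 2) ∧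
      Integrable (fun ρ => (Real.exp (b * |ρ| ^ 3) * ρ ^ l * w ρ) ^ 2) ∧
      Integrable (fun ρ => (Real.exp (b * |ρ| ^ 3) * iteratedDeriv l w ρ) ^ 2) := by
  intro b hb hba l
  have hV_ge : ∀ c ∈ Ioo 0 a, ∀ᶠ x in cocompact ℝ, 9 * c ^ 2 * x ^ 4 ≤ (ζ + x ^ 2) ^ 2 - ν :=
    fun c hc => eventually_cocompact_mul_pow_four_le_montgomery ζ ν (by nlinarith [hc.1, hc.2])
  have key := statement19_general (by fun_prop) hV_ge hu (fun k => (hdecay k).2.2) hw hwL2 heq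
    ⟨hb, hba⟩
  exact ⟨by simpa using key 0 0, by simpa [mul_assoc] using key l 0, by simpa using key 0 l⟩
end
end
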